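/- Let A = (A₁,…,Aₙ) be a reduced and irreducible tuple of finite subsets of ℤⁿ for which there is no group automorphism φ of ℤⁿ and no vectors v₁,…,vₙ ∈ ℤⁿ with φ(Aᵢ) + vᵢ ⊆ {0, e₁, …, eₙ} for all i. Then A is dual effective, and moreover there exists a Zariski-closed proper subset S ⊊ D_A such that every f ∈ D_A ∖ S has exactly one singular root x ∈ (ℂ∖{0})ⁿ, the Jacobian matrix (∂fᵢ/∂xⱼ(x)) at this root has rank exactly n − 1, and every other root of f is nonsingular. -/

import Mathlib

open Pointwise MeasureTheory

namespace Esterov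

/-- The standard embedding of the lattice `ℤⁿ` into `ℝⁿ`. -/
def toR {n : ℕ} (a : Fin n → ℤ) : Fin n → ℝ := fun j => (a j : ℝ)

/-- The lattice mixed volume of finite sets `A₁, …, Aₙ ⊆ ℤⁿ`:
`MV(A₁,…,Aₙ) = ∑_{∅ ≠ S ⊆ {1,…,n}} (−1)^{n−|S|} vol (conv (∑_{i ∈ S} Aᵢ))`. -/
noncomputable def MV {n : ℕ} (A : Fin n → Finset (Fin n → ℤ)) : ℝ :=
  ∑ S ∈ Finset.univ.powerset.filter (fun S : Finset (Fin n) => S.Nonempty),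
    (-1 : ℝ) ^ (n - S.card) *
      (volume (convexHull ℝ (∑ i ∈ S, toR '' (A i : Set (Fin n → ℤ))))).toReal

/-- The complex torus `(ℂ∖0)ⁿ`. -/
abbrev Torus (n : ℕ) := Fin n → ℂˣ

/-- The index type of the coefficients of a tuple of supports. -/
abbrev CIdx {n : ℕ} (A : Fin n → Finset (Fin n → ℤ)) := Σ i : Fin n, {a : Fin n → ℤ // a ∈ A i}

/-- The space `ℂ^A = ℂ^{A₁} ⊕ ⋯ ⊕ ℂ^{Aₙ}` of systems of Laurent polynomials supported at `A`,
encoded by their coefficients. -/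
abbrev Coeff {n : ℕ} (A : Fin n → Finset (Fin n → ℤ)) := CIdx A → ℂ

/-- The value of the Laurent monomial `x^a` at a point `x` of the torus. -/
noncomputable def mono {n : ℕ} (a : Fin n → ℤ) (x : Torus n) : ℂ :=
  ∏ j, ((x j : ℂ) ^ (a j))

/-- The value of the `i`-th polynomial of the system `c ∈ ℂ^A` at `x`. -/
noncomputable def evalAt {n : ℕ} (A : Fin n → Finset (Fin n → ℤ)) (c : Coeff A) (i : Fin n)
    (x : Torus n) : ℂ :=
  ∑ a ∈ (A i).attach, c ⟨i, a⟩ * mono a.1 x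

/-- `x` is a common root of the system `c ∈ ℂ^A`. -/
def IsRoot {n : ℕ} (A : Fin n → Finset (Fin n → ℤ)) (c : Coeff A) (x : Torus n) : Prop :=
  ∀ i, evalAt A c i x = 0

/-- The Jacobian matrix `(∂fᵢ/∂xⱼ (x))` of the system `c ∈ ℂ^A` at `x`
(note `∂(x^a)/∂xⱼ = aⱼ x^a / xⱼ`). -/
noncomputable def jacobian {n : ℕ} (A : Fin n → Finset (Fin n → ℤ)) (c : Coeff A)
    (x : Torus n) : Matrix (Fin n) (Fin n) ℂ :=
  Matrix.of fun i j => (∑ a ∈ (A i).attach, c ⟨i, a⟩ * (a.1 j : ℂ) * mono a.1 x) * (x j : ℂ)⁻¹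

/-- `x` is a singular root of the system `c`: a common root at which the Jacobian matrix
is degenerate. -/
def IsSingularRoot {n : ℕ} (A : Fin n → Finset (Fin n → ℤ)) (c : Coeff A) (x : Torus n) :
    Prop :=
  IsRoot A c x ∧ (jacobian A c x).det = 0

/-- A subset of `ℂ^ι` is algebraic if it is the common zero locus of a family of polynomials. -/
def IsAlgebraicSet {ι : Type*} (Z : Set (ι → ℂ)) : Prop :=
  ∃ S : Set (MvPolynomial ι ℂ), Z = {c | ∀ p ∈ S, MvPolynomial.eval c p = 0}

/-- The Zariski closure of a subset of `ℂ^ι`. -/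
def zclosure {ι : Type*} (Z : Set (ι → ℂ)) : Set (ι → ℂ) :=
  ⋂₀ {W | IsAlgebraicSet W ∧ Z ⊆ W}

/-- The ideal of polynomials vanishing on a subset of `ℂ^ι`. -/
noncomputable def vanishingIdeal {ι : Type*} (Z : Set (ι → ℂ)) : Ideal (MvPolynomial ι ℂ) where
  carrier := {p | ∀ c ∈ Z, MvPolynomial.eval c p = 0}
  add_mem' := by
    intro p q hp hq c hc
    simp [hp c hc, hq c hc]
  zero_mem' := by
    intro c hc
    simp
  smul_mem' := by
    intro p q hq c hc
    simp [smul_eq_mul, hq c hc]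

/-- The (complex) dimension of a subset of `ℂ^ι`, as the Krull dimension of the coordinate
ring of its Zariski closure. -/
noncomputable def adim {ι : Type*} (Z : Set (ι → ℂ)) : WithBot ℕ∞ :=
  ringKrullDim (MvPolynomial ι ℂ ⧸ vanishingIdeal Z)

/-- The discriminant `D_A`: the Zariski closure of the set of systems having a singular root. -/
noncomputable def discSet {n : ℕ} (A : Fin n → Finset (Fin n → ℤ)) : Set (Coeff A) :=
  zclosure {c | ∃ x, IsSingularRoot A c x}

/-- The tuple `A` is dual effective: `D_A` is a hypersurface, i.e. has complex dimension
`dim ℂ^A − 1`. -/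
def DualEffective {n : ℕ} (A : Fin n → Finset (Fin n → ℤ)) : Prop :=
  adim (discSet A) = ((Fintype.card (CIdx A) - 1 : ℕ) : WithBot ℕ∞)

/-- The finite set `s` can be translated into the subgroup `L` of `ℤⁿ`. -/
def TranslatesInto {n : ℕ} (s : Finset (Fin n → ℤ)) (L : Submodule ℤ (Fin n → ℤ)) : Prop :=
  ∃ v : Fin n → ℤ, ∀ a ∈ s, a - v ∈ L

/-- A tuple of finite sets in `ℤⁿ` is reduced if the sets cannot all be translated into one
common proper subgroup of `ℤⁿ`. -/
def IsReducedTuple {n : ℕ} (A : Fin n → Finset (Fin n → ℤ)) : Prop :=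
  ¬ ∃ L : Submodule ℤ (Fin n → ℤ), L ≠ ⊤ ∧ ∀ i, TranslatesInto (A i) L

/-- A tuple of `n` finite sets in `ℤⁿ` is irreducible if for no `m` with `0 < m < n` can some
`n − m` of the sets be translated into one common subgroup of rank at most `n − m`. -/
def IsIrreducibleTuple {n : ℕ} (A : Fin n → Finset (Fin n → ℤ)) : Prop :=
  ¬ ∃ (I : Finset (Fin n)) (L : Submodule ℤ (Fin n → ℤ)),
      0 < I.card ∧ I.card < n ∧ Module.finrank ℤ L ≤ I.card ∧
      ∀ i ∈ I, TranslatesInto (A i) L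

/-- The incidence variety `E = {(x, f) : f(x) = 0} ⊆ (ℂ∖0)ⁿ × ℂ^A`. -/
def incidence {n : ℕ} (A : Fin n → Finset (Fin n → ℤ)) : Set (Torus n × Coeff A) :=
  {p | IsRoot A p.2 p.1}

/-- The projection `π : E → ℂ^A`. -/
def proj {n : ℕ} (A : Fin n → Finset (Fin n → ℤ)) : incidence A → Coeff A :=
  fun p => p.1.2

/-- The set of roots of the system `c`. -/
def RootSet {n : ℕ} (A : Fin n → Finset (Fin n → ℤ)) (c : Coeff A) :=
  {x : Torus n // IsRoot A c x}

/-- `γ` is a loop in `ℂ^A ∖ B` based at `f`. -/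
def IsLoop {n : ℕ} (A : Fin n → Finset (Fin n → ℤ)) (B : Set (Coeff A)) (f : Coeff A)
    (γ : unitInterval → Coeff A) : Prop :=
  Continuous γ ∧ (∀ t, γ t ∉ B) ∧ γ 0 = f ∧ γ 1 = f

/-- The loop `γ` based at `f` induces the permutation `σ` of the root set of `f` by path
lifting: for every root `x` the lift of `γ` starting at `x` ends at `σ x`. -/
def Induces {n : ℕ} (A : Fin n → Finset (Fin n → ℤ)) (γ : unitInterval → Coeff A)
    (f : Coeff A) (σ : RootSet A f → RootSet A f) : Prop :=
  ∀ x : RootSet A f, ∃ δ : unitInterval → Torus n,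
    Continuous δ ∧ δ 0 = x.1 ∧ (∀ t, IsRoot A (γ t) (δ t)) ∧ δ 1 = (σ x).1

/-- The vertex set `{0, e₁, …, eₙ}` of the standard simplex in `ℤⁿ`. -/
def stdSimplexVertices (n : ℕ) : Set (Fin n → ℤ) :=
  insert 0 (Set.range fun j : Fin n => (Pi.single j 1 : Fin n → ℤ))

/-- The tuple `A` is linear up to a monomial change of variables: some automorphism of `ℤⁿ`
followed by translations takes each `Aᵢ` into `{0, e₁, …, eₙ}`. -/
def EssentiallyLinear {n : ℕ} (A : Fin n → Finset (Fin n → ℤ)) : Prop :=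
  ∃ (φ : (Fin n → ℤ) ≃+ (Fin n → ℤ)) (v : Fin n → (Fin n → ℤ)),
    ∀ i, ∀ a ∈ A i, φ a + v i ∈ stdSimplexVertices n

/-- Krull dimension of a finitely generated domain bounds the number of algebraically independent
elements. -/
theorem card_le_ringKrullDim {B κ : Type} [CommRing B] [IsDomain B] [Algebra ℂ B]
    [Algebra.FiniteType ℂ B] [Fintype κ] (b : κ → B) (hb : AlgebraicIndependent ℂ b) :
    ((Fintype.card κ : ℕ) : WithBot ℕ∞) ≤ ringKrullDim B := by
  obtain ⟨s, g, ginj, gint⟩ := exists_integral_inj_algHom_of_fg ℂ B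
  let _ : Algebra (MvPolynomial (Fin s) ℂ) B := g.toRingHom.toAlgebra
  have : IsScalarTower ℂ (MvPolynomial (Fin s) ℂ) B :=
    IsScalarTower.of_algebraMap_eq fun x => (g.commutes x).symm
  have : Algebra.IsIntegral (MvPolynomial (Fin s) ℂ) B := ⟨gint⟩
  have : FaithfulSMul (MvPolynomial (Fin s) ℂ) B :=
    (faithfulSMul_iff_algebraMap_injective _ _).mpr ginj
  have h1 := trdeg_add_eq ℂ (MvPolynomial (Fin s) ℂ) (A := B)
  rw [trdeg_eq_zero (R := MvPolynomial (Fin s) ℂ) (A := B), MvPolynomial.trdeg_of_isDomain] at h1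
  have h2 := hb.cardinalMk_le_trdeg
  rw [← h1] at h2
  have h3 : Fintype.card κ ≤ s := by simpa using h2
  have h4 : ringKrullDim (MvPolynomial (Fin s) ℂ) = s := by
    rw [MvPolynomial.ringKrullDim_of_isNoetherianRing]
    simp
  have h5 : ringKrullDim (MvPolynomial (Fin s) ℂ) ≤ ringKrullDim B := by
    unfold ringKrullDim Order.krullDim
    refine iSup_le fun l => ?_
    obtain ⟨Q, -, hQ, hQ'⟩ := Ideal.exists_ideal_over_prime_of_isIntegral
      (S := B) (RelSeries.head l).asIdeal ⊥ (by
        intro x hx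
        have : x = 0 := by simpa using hx
        simp [this])
    have := hQ
    have : Q.LiesOver (RelSeries.head l).asIdeal := ⟨hQ'.symm⟩
    obtain ⟨L, hL, -⟩ := Ideal.exists_ltSeries_of_hasGoingUp l Q
    rw [← hL]
    exact le_iSup (fun p : LTSeries (PrimeSpectrum B) => (p.length : WithBot ℕ∞)) L
  refine le_trans ?_ (h4 ▸ h5)
  exact_mod_cast h3

/-- Rado's theorem on independent transversals for subspaces. -/
theorem rado {V κ : Type} [AddCommGroup V] [Module ℂ V] [FiniteDimensional ℂ V] [Fintype κ]
    [DecidableEq κ] (m : ℕ) : ∀ (L : κ → Submodule ℂ V),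
    (∑ i, Module.finrank ℂ (L i) = m) →
    (∀ J : Finset κ, J.card ≤ Module.finrank ℂ (⨆ i ∈ J, L i : Submodule ℂ V)) →
    ∃ ℓ : κ → V, (∀ i, ℓ i ∈ L i) ∧ LinearIndependent ℂ ℓ := by
  induction m using Nat.strong_induction_on with
  | _ m ih =>
  intro L hm hL
  by_cases h1 : ∀ i, Module.finrank ℂ (L i) ≤ 1
  · have h2 : ∀ i, ∃ v : V, L i = Submodule.span ℂ {v} := by
      intro i
      have := hL {i}
      rw [Finset.card_singleton] at this
      have e : (⨆ i' ∈ ({i} : Finset κ), L i') = L i := by simp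
      rw [e] at this
      have h3 : Module.finrank ℂ (L i) = 1 := le_antisymm (h1 i) this
      obtain ⟨v, hv, hv'⟩ := finrank_eq_one_iff'.mp h3
      refine ⟨v, le_antisymm ?_ ?_⟩
      · intro w hw
        obtain ⟨c, hc⟩ := hv' ⟨w, hw⟩
        rw [Submodule.mem_span_singleton]
        exact ⟨c, by simpa using congrArg Subtype.val hc⟩
      · rw [Submodule.span_singleton_le_iff_mem]; exact v.2
    choose v hv using h2
    refine ⟨v, fun i => by rw [hv i]; exact Submodule.mem_span_singleton_self _, ?_⟩
    rw [linearIndependent_iff_card_le_finrank_span]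
    have := hL Finset.univ
    rw [Finset.card_univ] at this
    refine this.trans (le_of_eq ?_)
    have e : (⨆ i ∈ (Finset.univ : Finset κ), L i) = Submodule.span ℂ (Set.range v) := by
      rw [Submodule.span_range_eq_iSup]
      simp [hv]
    rw [Set.finrank, e]
  · push Not at h1
    obtain ⟨i1, hi1⟩ := h1
    -- split `L i1`
    obtain ⟨X, Y, hX, hY, hXY⟩ : ∃ X Y : Submodule ℂ V, X < L i1 ∧ Y < L i1 ∧ X ⊔ Y = L i1 := by
      have hne : L i1 ≠ ⊥ := by
        intro h; rw [h] at hi1; simp at hi1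
      obtain ⟨v, hv, hv0⟩ := Submodule.exists_mem_ne_zero_of_ne_bot hne
      have hle : Submodule.span ℂ {v} ≤ L i1 := by
        rw [Submodule.span_singleton_le_iff_mem]; exact hv
      obtain ⟨Y, hY⟩ := exists_isCompl (Submodule.span ℂ {v})
      have hs : Submodule.span ℂ {v} ⊔ (Y ⊓ L i1) = L i1 := by
        rw [← sup_inf_assoc_of_le Y hle, hY.sup_eq_top, top_inf_eq]
      refine ⟨Submodule.span ℂ {v}, Y ⊓ L i1, lt_of_le_of_ne hle ?_,
        lt_of_le_of_ne inf_le_right ?_, hs⟩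
      · intro h
        rw [← h, finrank_span_singleton hv0] at hi1
        omega
      · intro h
        have hvY : v ∈ Y ⊓ L i1 := by rw [h]; exact hv
        have := hY.disjoint.le_bot ⟨Submodule.mem_span_singleton_self v, hvY.1⟩
        exact hv0 (by simpa using this)
    have key : ∀ Z : Submodule ℂ V, Z < L i1 →
        (∀ J : Finset κ, J.card ≤
          Module.finrank ℂ (⨆ i ∈ J, Function.update L i1 Z i : Submodule ℂ V)) →
        ∃ ℓ : κ → V, (∀ i, ℓ i ∈ L i) ∧ LinearIndependent ℂ ℓ := by
      intro Z hZ hJ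
      obtain ⟨ℓ, hℓ, hl⟩ := ih (∑ i, Module.finrank ℂ (Function.update L i1 Z i)) (by
        rw [← hm]
        apply Finset.sum_lt_sum
        · intro i _
          by_cases h : i = i1
          · subst h; rw [Function.update_self]; exact Submodule.finrank_mono hZ.le
          · rw [Function.update_of_ne h]
        · exact ⟨i1, Finset.mem_univ _, by
            rw [Function.update_self]; exact Submodule.finrank_lt_finrank_of_lt hZ⟩) _ rfl hJ
      refine ⟨ℓ, fun i => ?_, hl⟩
      have := hℓ i
      by_cases h : i = i1
      · subst h; simp only [Function.update_self] at this; exact hZ.le this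
      · simpa [h] using this
    by_cases hXc : ∀ J : Finset κ, J.card ≤
        Module.finrank ℂ (⨆ i ∈ J, Function.update L i1 X i : Submodule ℂ V)
    · exact key X hX hXc
    by_cases hYc : ∀ J : Finset κ, J.card ≤
        Module.finrank ℂ (⨆ i ∈ J, Function.update L i1 Y i : Submodule ℂ V)
    · exact key Y hY hYc
    exfalso
    push Not at hXc hYc
    obtain ⟨J, hJ⟩ := hXc
    obtain ⟨K, hK⟩ := hYc
    have mem : ∀ (Z : Submodule ℂ V) (J : Finset κ),
        Module.finrank ℂ (⨆ i ∈ J, Function.update L i1 Z i : Submodule ℂ V) < J.card → i1 ∈ J := by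
      intro Z J hJ
      by_contra h
      have h' := hL J
      have : (⨆ i ∈ J, Function.update L i1 Z i) = ⨆ i ∈ J, L i := by
        refine iSup_congr fun i => iSup_congr fun hi => ?_
        rw [Function.update_of_ne]
        rintro rfl; exact h hi
      rw [this] at hJ
      omega
    have mJ := mem X J hJ
    have mK := mem Y K hK
    set SX := (⨆ i ∈ J, Function.update L i1 X i : Submodule ℂ V) with hSX
    set SY := (⨆ i ∈ K, Function.update L i1 Y i : Submodule ℂ V) with hSY
    have leX : ∀ i ∈ J, i ≠ i1 → L i ≤ SX := by
      intro i hi hne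
      have := le_iSup₂ (f := fun i (_ : i ∈ J) => Function.update L i1 X i) i hi
      simpa [Function.update_of_ne hne] using this
    have leY : ∀ i ∈ K, i ≠ i1 → L i ≤ SY := by
      intro i hi hne
      have := le_iSup₂ (f := fun i (_ : i ∈ K) => Function.update L i1 Y i) i hi
      simpa [Function.update_of_ne hne] using this
    have leX1 : X ≤ SX := by
      have := le_iSup₂ (f := fun i (_ : i ∈ J) => Function.update L i1 X i) i1 mJ
      simpa using this
    have leY1 : Y ≤ SY := by
      have := le_iSup₂ (f := fun i (_ : i ∈ K) => Function.update L i1 Y i) i1 mK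
      simpa using this
    have hsup : (⨆ i ∈ J ∪ K, L i) ≤ SX ⊔ SY := by
      refine iSup₂_le fun i hi => ?_
      by_cases h : i = i1
      · subst h; rw [← hXY]; exact sup_le_sup leX1 leY1
      · rcases Finset.mem_union.mp hi with hi | hi
        · exact (leX i hi h).trans le_sup_left
        · exact (leY i hi h).trans le_sup_right
    have hinf : (⨆ i ∈ (J ∩ K).erase i1, L i) ≤ SX ⊓ SY := by
      refine iSup₂_le fun i hi => ?_
      rw [Finset.mem_erase, Finset.mem_inter] at hi
      exact le_inf (leX i hi.2.1 hi.1) (leY i hi.2.2 hi.1)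
    have e1 := (hL _).trans (Submodule.finrank_mono hsup)
    have e2 := (hL _).trans (Submodule.finrank_mono hinf)
    have e3 := Submodule.finrank_sup_add_finrank_inf_eq SX SY
    have e4 := Finset.card_union_add_card_inter J K
    rw [Finset.card_erase_of_mem (Finset.mem_inter.mpr ⟨mJ, mK⟩)] at e2
    have e5 : 0 < (J ∩ K).card := Finset.card_pos.mpr ⟨i1, Finset.mem_inter.mpr ⟨mJ, mK⟩⟩
    omega

/-- A multivariate polynomial over `ℂ` with vanishing partial derivatives is constant. -/
theorem eq_C_of_pderiv_eq_zero {ι : Type} (G : MvPolynomial ι ℂ)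
    (h : ∀ k, MvPolynomial.pderiv k G = 0) : ∃ c, G = MvPolynomial.C c := by
  refine ⟨MvPolynomial.coeff 0 G, ?_⟩
  classical
  ext m
  rw [MvPolynomial.coeff_C]
  split_ifs with hm
  · rw [← hm]
  · have : ∃ k, m k ≠ 0 := by
      by_contra hc
      push Not at hc
      exact hm (Finsupp.ext fun k => (hc k).symm)
    obtain ⟨k, hk⟩ := this
    have h1 := congrArg (MvPolynomial.coeff (m - Finsupp.single k 1)) (h k)
    rw [MvPolynomial.coeff_pderiv, MvPolynomial.coeff_zero] at h1
    have h2 : m - Finsupp.single k 1 + Finsupp.single k 1 = m := by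
      apply tsub_add_cancel_of_le
      rw [Finsupp.single_le_iff]
      omega
    rw [h2] at h1
    rcases mul_eq_zero.mp h1 with h3 | h3
    · exact h3
    · exfalso
      norm_cast at h3

/-- Partial derivatives lower the degree. -/
theorem totalDegree_pderiv_lt {ι : Type} (G : MvPolynomial ι ℂ) (k : ι)
    (h : MvPolynomial.pderiv k G ≠ 0) :
    (MvPolynomial.pderiv k G).totalDegree < G.totalDegree := by
  classical
  obtain ⟨m, hm, hm'⟩ := Finset.exists_mem_eq_sup (MvPolynomial.pderiv k G).support
    (by rwa [Finset.nonempty_iff_ne_empty, Ne, MvPolynomial.support_eq_empty])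
    (fun s => s.sum fun _ e => e)
  have h1 : (MvPolynomial.pderiv k G).totalDegree = m.sum fun _ e => e := hm'
  rw [h1]
  rw [MvPolynomial.mem_support_iff, MvPolynomial.coeff_pderiv] at hm
  have h2 : m + Finsupp.single k 1 ∈ G.support := by
    rw [MvPolynomial.mem_support_iff]
    exact left_ne_zero_of_mul hm
  have h3 := MvPolynomial.le_totalDegree h2
  rw [Finsupp.sum_add_index' (by simp) (by intros; rfl), Finsupp.sum_single_index rfl] at h3
  omega

/-- The matrix of (logarithmic) derivatives at `1`. -/
def JM {n : ℕ} {ι R : Type} [Fintype ι] [CommRing R] (blk : ι → Fin n) (ex : ι → Fin n → ℤ)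
    (c : ι → R) : Matrix (Fin n) (Fin n) R :=
  Matrix.of fun i j => ∑ k, if blk k = i then c k * ((ex k j : ℤ) : R) else 0

/-- The values at `1`. -/
def BS {n : ℕ} {ι R : Type} [Fintype ι] [CommRing R] (blk : ι → Fin n)
    (c : ι → R) (i : Fin n) : R :=
  ∑ k, if blk k = i then c k else 0

/-- `1` is a singular root of `c` with left null vector `l`. -/
structure Sing {n : ℕ} {ι : Type} [Fintype ι] (blk : ι → Fin n) (ex : ι → Fin n → ℤ)
    (c : ι → ℂ) (l : Fin n → ℂ) : Prop where
  sum : ∀ i, BS blk c i = 0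
  ne : l ≠ 0
  ker : ∀ j, ∑ k, l (blk k) * c k * ((ex k j : ℤ) : ℂ) = 0

/-- The hypotheses on the tuple. -/
structure Good {n : ℕ} {ι : Type} (blk : ι → Fin n) (ex : ι → Fin n → ℤ) : Prop where
  surj : Function.Surjective blk
  red : ∀ L : Submodule ℤ (Fin n → ℤ),
    (∀ k k', blk k = blk k' → ex k - ex k' ∈ L) → L = ⊤
  irr : ∀ (I : Finset (Fin n)) (L : Submodule ℤ (Fin n → ℤ)), I.Nonempty → I ≠ Finset.univ →
    (∀ k k', blk k = blk k' → blk k ∈ I → ex k - ex k' ∈ L) → I.card < Module.finrank ℤ L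

/-- Coercion of integral vectors to complex ones. -/
def toC {n : ℕ} (a : Fin n → ℤ) : Fin n → ℂ := fun j => (a j : ℂ)

/-- `toC` as a linear map. -/
def toCL (n : ℕ) : (Fin n → ℤ) →ₗ[ℤ] (Fin n → ℂ) where
  toFun := toC
  map_add' := by intro a b; ext j; simp [toC]
  map_smul' := by intro a b; ext j; simp [toC]

theorem toC_sub {n : ℕ} (a b : Fin n → ℤ) : toC (a - b) = toC a - toC b := (toCL n).map_sub a b

/-- The complex span of the differences. -/
def LC {n : ℕ} {ι : Type} (blk : ι → Fin n) (ex : ι → Fin n → ℤ) (I : Set (Fin n)) :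
    Submodule ℂ (Fin n → ℂ) :=
  Submodule.span ℂ {v | ∃ k k', blk k = blk k' ∧ blk k ∈ I ∧ v = toC (ex k) - toC (ex k')}

theorem linInd_toC {n r : ℕ} (v : Fin r → Fin n → ℤ) (hv : LinearIndependent ℤ v) :
    LinearIndependent ℂ (fun i => toC (v i)) := by
  have hQ : ∀ q : Fin r → ℚ, (∀ j, ∑ i, q i * (v i j : ℚ) = 0) → ∀ i, q i = 0 := by
    intro q hq
    obtain ⟨d, hd⟩ := IsLocalization.exist_integer_multiples (nonZeroDivisors ℤ) Finset.univ q
    have hd0 : ((d : ℤ) : ℚ) ≠ 0 := by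
      have := nonZeroDivisors.coe_ne_zero d
      exact_mod_cast this
    choose z hz using fun i => hd i (Finset.mem_univ i)
    have h1 : ∑ i, z i • v i = 0 := by
      ext j
      have h2 : ((∑ i, z i * v i j : ℤ) : ℚ) = 0 := by
        push_cast
        have h3 : ∀ i, (z i : ℚ) = (d : ℤ) * q i := by
          intro i
          have := hz i
          simpa [Algebra.smul_def] using this
        simp_rw [h3, mul_assoc]
        rw [← Finset.mul_sum, hq j, mul_zero]
      have h3 : (∑ i, z i * v i j : ℤ) = 0 := by exact_mod_cast h2
      simpa using h3
    have h2 := Fintype.linearIndependent_iff.mp hv z h1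
    intro i
    have := hz i
    rw [h2 i] at this
    simpa [Algebra.smul_def] using this
  rw [Fintype.linearIndependent_iff]
  intro c hc i
  rw [← Module.forall_dual_apply_eq_zero_iff ℚ]
  intro f
  refine hQ (fun i => f (c i)) (fun j => ?_) i
  have h1 := congrFun hc j
  have h2 := congrArg f h1
  simp only [Finset.sum_apply, Pi.smul_apply, smul_eq_mul, toC, map_sum, Pi.zero_apply,
    map_zero] at h2
  rw [← h2]
  refine Finset.sum_congr rfl fun i _ => ?_
  have : c i * (v i j : ℂ) = (v i j : ℚ) • c i := by
    rw [Rat.smul_def]; push_cast; ring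
  rw [this, map_smul, smul_eq_mul, mul_comm]

section
variable {n : ℕ} {ι : Type} [Fintype ι] [DecidableEq ι] {blk : ι → Fin n} {ex : ι → Fin n → ℤ}

theorem Good.card_lt (hg : Good blk ex) (I : Finset (Fin n)) (hI : I.Nonempty)
    (hI' : I ≠ Finset.univ) : I.card < Module.finrank ℂ (LC blk ex I) := by
  let L : Submodule ℤ (Fin n → ℤ) := ((LC blk ex I).restrictScalars ℤ).comap (toCL n)
  have h1 := hg.irr I L hI hI' (by
    intro k k' hk hI
    change toC (ex k - ex k') ∈ LC blk ex I
    rw [toC_sub]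
    exact Submodule.subset_span ⟨k, k', hk, hI, rfl⟩)
  refine h1.trans_le ?_
  let b := Module.finBasis ℤ L
  have h2 : LinearIndependent ℤ (fun i => ((b i : L) : Fin n → ℤ)) :=
    b.linearIndependent.map' L.subtype (Submodule.ker_subtype L)
  have h3 := linInd_toC _ h2
  have h4 : LinearIndependent ℂ (fun i => (⟨toC (b i : Fin n → ℤ), (b i).2⟩ : LC blk ex I)) :=
    LinearIndependent.of_comp (LC blk ex I).subtype h3
  simpa using h4.fintype_card_le_finrank


/-- Restriction to lines is polynomial. -/
def LP {W : Type} [AddCommGroup W] [Module ℂ W] (G : W → ℂ) : Prop :=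
  ∀ w d : W, ∃ p : Polynomial ℂ, ∀ ε : ℂ, G (w + ε • d) = p.eval ε

theorem LP.const {W : Type} [AddCommGroup W] [Module ℂ W] (a : ℂ) : LP (fun _ : W => a) :=
  fun _ _ => ⟨Polynomial.C a, by simp⟩

theorem LP.lin {W : Type} [AddCommGroup W] [Module ℂ W] (f : W →ₗ[ℂ] ℂ) : LP (fun w => f w) :=
  fun w d => ⟨Polynomial.C (f w) + Polynomial.X * Polynomial.C (f d), by intro ε; simp; ring⟩

theorem LP.aeval {W κ : Type} [AddCommGroup W] [Module ℂ W] (g : κ → W → ℂ)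
    (hg : ∀ k, LP (g k)) (P : MvPolynomial κ ℂ) :
    LP (fun w => MvPolynomial.eval (fun k => g k w) P) := by
  intro w d
  choose p hp using fun k => hg k w d
  refine ⟨MvPolynomial.aeval p P, fun ε => ?_⟩
  simp_rw [hp]
  have : (Polynomial.evalRingHom ε).comp (MvPolynomial.aeval p : _ →ₐ[ℂ] _).toRingHom =
      MvPolynomial.eval (fun k => (p k).eval ε) := by
    apply MvPolynomial.ringHom_ext
    · intro r; simp
    · intro k; simp
  exact (congrArg (fun f => f P) this).symm

theorem LP.add {W : Type} [AddCommGroup W] [Module ℂ W] {f g : W → ℂ} (hf : LP f) (hg : LP g) :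
    LP (fun w => f w + g w) := by
  intro w d
  obtain ⟨p, hp⟩ := hf w d
  obtain ⟨q, hq⟩ := hg w d
  exact ⟨p + q, by simp [hp, hq]⟩

theorem LP.sub {W : Type} [AddCommGroup W] [Module ℂ W] {f g : W → ℂ} (hf : LP f) (hg : LP g) :
    LP (fun w => f w - g w) := by
  intro w d
  obtain ⟨p, hp⟩ := hf w d
  obtain ⟨q, hq⟩ := hg w d
  exact ⟨p - q, by simp [hp, hq]⟩

theorem LP.mul {W : Type} [AddCommGroup W] [Module ℂ W] {f g : W → ℂ} (hf : LP f) (hg : LP g) :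
    LP (fun w => f w * g w) := by
  intro w d
  obtain ⟨p, hp⟩ := hf w d
  obtain ⟨q, hq⟩ := hg w d
  exact ⟨p * q, by simp [hp, hq]⟩

theorem LP.det {W κ : Type} [AddCommGroup W] [Module ℂ W] [Fintype κ] [DecidableEq κ]
    (M : W → Matrix κ κ ℂ) (h : ∀ i j, LP (fun w => M w i j)) : LP (fun w => (M w).det) := by
  intro w d
  choose p hp using fun i j => h i j w d
  refine ⟨(Matrix.of p).det, fun ε => ?_⟩
  rw [← Polynomial.coe_evalRingHom, RingHom.map_det]
  have : M (w + ε • d) = (Polynomial.evalRingHom ε).mapMatrix (Matrix.of p) := by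
    ext i j
    simp [hp]
  exact congrArg Matrix.det this

/-- Elements of the span of differences are realised by coefficient vectors. -/
theorem exists_coeff (I : Set (Fin n)) (l : Fin n → ℂ) (hl : ∀ i ∈ I, l i ≠ 0)
    (w : Fin n → ℂ) (hw : w ∈ LC blk ex I) :
    ∃ c : ι → ℂ, (∀ k, blk k ∉ I → c k = 0) ∧ (∀ i, BS blk c i = 0) ∧
      ∀ j, ∑ k, l (blk k) * c k * ((ex k j : ℤ) : ℂ) = w j := by
  induction hw using Submodule.span_induction with
  | mem w hw =>
    obtain ⟨k, k', hk, hI, rfl⟩ := hw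
    refine ⟨(l (blk k))⁻¹ • (Pi.single k 1 - Pi.single k' 1), ?_, ?_, ?_⟩
    · intro m hm
      have h1 : m ≠ k := by rintro rfl; exact hm hI
      have h2 : m ≠ k' := by rintro rfl; exact hm (hk ▸ hI)
      simp [h1, h2]
    · intro i
      simp only [BS, Pi.smul_apply, Pi.sub_apply, smul_eq_mul]
      rw [← Finset.sum_filter, ← Finset.mul_sum, Finset.sum_sub_distrib]
      simp [Finset.sum_pi_single, hk]
    · intro j
      have hl' := hl _ hI
      have : ∀ m : ι, l (blk m) * ((l (blk k))⁻¹ • (Pi.single k 1 - Pi.single k' 1) : ι → ℂ) m *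
          ((ex m j : ℤ) : ℂ) = (Pi.single k ((ex k j : ℤ) : ℂ) : ι → ℂ) m -
            (Pi.single k' ((ex k' j : ℤ) : ℂ) : ι → ℂ) m := by
        intro m
        by_cases h1 : m = k
        · subst h1
          by_cases h2 : m = k'
          · subst h2; simp
          · simp [h2, hl']
        · by_cases h2 : m = k'
          · subst h2; simp [h1, ← hk, hl']
          · simp [h1, h2]
      simp_rw [this]
      simp [toC]
  | zero => exact ⟨0, by simp, by simp [BS], by simp⟩
  | add u v _ _ hu hv =>
    obtain ⟨c, h1, h2, h3⟩ := hu
    obtain ⟨d, g1, g2, g3⟩ := hv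
    refine ⟨c + d, ?_, ?_, ?_⟩
    · intro k hk; simp [h1 k hk, g1 k hk]
    · intro i
      have e1 := h2 i
      have e2 := g2 i
      simp only [BS, ← Finset.sum_filter] at e1 e2 ⊢
      simp [Finset.sum_add_distrib, e1, e2]
    · intro j
      simp only [Pi.add_apply, mul_add, add_mul, Finset.sum_add_distrib, h3, g3]
  | smul a u _ hu =>
    obtain ⟨c, h1, h2, h3⟩ := hu
    refine ⟨a • c, ?_, ?_, ?_⟩
    · intro k hk; simp [h1 k hk]
    · intro i
      have e1 := h2 i
      simp only [BS, ← Finset.sum_filter] at e1 ⊢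
      simp [← Finset.mul_sum, e1]
    · intro j
      simp only [Pi.smul_apply, smul_eq_mul, ← h3, Finset.mul_sum]
      exact Finset.sum_congr rfl fun k _ => by ring

/-- Support enlarging. -/
theorem Good.sup (hg : Good blk ex) (G : (ι → ℂ) × (Fin n → ℂ) → ℂ) (hG : LP G) (N : ℕ) :
    ∀ c l, Sing blk ex c l → G (c, l) ≠ 0 → (Finset.univ.filter fun i => l i = 0).card = N →
    ∃ c' l', Sing blk ex c' l' ∧ (∀ i, l' i ≠ 0) ∧ G (c', l') ≠ 0 := by
  induction N using Nat.strong_induction_on with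
  | _ N ih =>
  intro c l hs h0 hN
  by_cases hz : ∀ i, l i ≠ 0
  · exact ⟨c, l, hs, hz, h0⟩
  push Not at hz
  obtain ⟨i1, hi1⟩ := hz
  let I : Finset (Fin n) := Finset.univ.filter fun i => l i ≠ 0
  have hIne : I.Nonempty := by
    by_contra hc
    apply hs.ne
    ext i
    by_contra hi
    exact hc ⟨i, by simpa [I] using hi⟩
  have hIu : I ≠ Finset.univ := by
    intro h
    have : i1 ∈ I := by rw [h]; simp
    simp [I, hi1] at this
  have hcard := hg.card_lt I hIne hIu
  -- the dependency
  obtain ⟨μ, hμ0, hμI, hμ⟩ : ∃ μ : Fin n → ℂ, μ ≠ 0 ∧ (∀ i ∈ I, μ i = 0) ∧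
      (fun j => ∑ k, μ (blk k) * c k * ((ex k j : ℤ) : ℂ)) ∈ LC blk ex I := by
    let E : ({i // i ∉ I} → ℂ) →ₗ[ℂ] (Fin n → ℂ) :=
      { toFun := fun m i => if h : i ∉ I then m ⟨i, h⟩ else 0
        map_add' := by
          intro a b; ext i
          by_cases h : i ∈ I <;> simp [h]
        map_smul' := by
          intro a b; ext i
          by_cases h : i ∈ I <;> simp [h] }
    let F : (Fin n → ℂ) →ₗ[ℂ] (Fin n → ℂ) :=
      { toFun := fun μ j => ∑ k, μ (blk k) * c k * ((ex k j : ℤ) : ℂ)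
        map_add' := by
          intro a b; ext j
          simp [add_mul, Finset.sum_add_distrib]
        map_smul' := by
          intro a b; ext j
          simp [mul_assoc, Finset.mul_sum] }
    let H := (LC blk ex I).mkQ ∘ₗ F ∘ₗ E
    have hlt : Module.finrank ℂ ((Fin n → ℂ) ⧸ LC blk ex I) <
        Module.finrank ℂ ({i // i ∉ I} → ℂ) := by
      have e1 := Submodule.finrank_quotient_add_finrank (LC blk ex (I : Set (Fin n)))
      rw [Module.finrank_fin_fun] at e1
      rw [Module.finrank_fintype_fun_eq_card, Fintype.card_subtype_compl]
      simp only [Fintype.card_fin, Fintype.card_coe]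
      have e2 : I.card ≤ n := by simpa using Finset.card_le_univ I
      omega
    obtain ⟨m, hm, hm0⟩ := (Submodule.ne_bot_iff _).mp (LinearMap.ker_ne_bot_of_finrank_lt hlt (f := H))
    refine ⟨E m, ?_, ?_, ?_⟩
    · intro h
      apply hm0
      ext i
      have := congrFun h i.1
      simpa [E, i.2] using this
    · intro i hi
      simp [E, hi]
    · have : H m = 0 := hm
      exact (Submodule.Quotient.mk_eq_zero _).mp this
  obtain ⟨c1, hc1, hc1s, hc1k⟩ := exists_coeff (blk := blk) (ex := ex) (I : Set (Fin n)) l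
    (by intro i hi; simpa [I] using hi) _ ((LC blk ex I).neg_mem hμ)
  obtain ⟨p, hp⟩ := hG (c, l) (c1, μ)
  have hp0 : p ≠ 0 := by
    rintro rfl
    have := hp 0
    simp at this
    exact h0 this
  obtain ⟨ε, hε⟩ : ∃ ε, (p * Polynomial.X).eval ε ≠ 0 := by
    by_contra hc
    push Not at hc
    have : p * Polynomial.X = 0 := Polynomial.funext (by simpa using hc)
    simp [hp0] at this
  have hε0 : ε ≠ 0 := by rintro rfl; simp at hε
  have hpe : p.eval ε ≠ 0 := by intro h; simp [h] at hε
  have hIl : ∀ i, i ∈ I ↔ l i ≠ 0 := by intro i; simp [I]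
  obtain ⟨i2, hi2⟩ : ∃ i, μ i ≠ 0 := by
    by_contra hc; push Not at hc; exact hμ0 (funext hc)
  have hi2l : l i2 = 0 := by
    by_contra h; exact hi2 (hμI i2 ((hIl i2).mpr h))
  have hsub : (Finset.univ.filter fun i => (l + ε • μ) i = 0) ⊂
      (Finset.univ.filter fun i => l i = 0) := by
    rw [Finset.ssubset_iff_of_subset]
    · exact ⟨i2, by simpa using hi2l, by simp [hi2l, hε0, hi2]⟩
    · intro i hi
      simp only [Finset.mem_filter, Finset.mem_univ, true_and, Pi.add_apply, Pi.smul_apply,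
        smul_eq_mul] at hi ⊢
      by_contra h
      rw [hμI i ((hIl i).mpr h)] at hi
      simp at hi
      exact h hi
  refine ih _ ?_ (c + ε • c1) (l + ε • μ) ⟨?_, ?_, ?_⟩ ?_ rfl
  · rw [← hN]; exact Finset.card_lt_card hsub
  · intro i
    have e1 := hs.sum i
    have e2 := hc1s i
    simp only [BS, ← Finset.sum_filter] at e1 e2 ⊢
    simp [Finset.sum_add_distrib, ← Finset.mul_sum, e1, e2]
  · intro h
    obtain ⟨i3, hi3⟩ := hIne
    have := congrFun h i3
    simp [hμI i3 hi3] at this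
    exact (hIl i3).mp hi3 this
  · intro j
    have e1 := hs.ker j
    have e2 := hc1k j
    have : ∀ k, (l + ε • μ) (blk k) * (c + ε • c1) k * ((ex k j : ℤ) : ℂ) =
        l (blk k) * c k * ((ex k j : ℤ) : ℂ) + ε * (l (blk k) * c1 k * ((ex k j : ℤ) : ℂ)) +
        ε * (μ (blk k) * c k * ((ex k j : ℤ) : ℂ)) := by
      intro k
      have : μ (blk k) * c1 k = 0 := by
        by_cases h : blk k ∈ I
        · rw [hμI _ h, zero_mul]
        · rw [hc1 k (by simpa using h), mul_zero]
      simp only [Pi.add_apply, Pi.smul_apply, smul_eq_mul]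
      linear_combination (ε ^ 2 * ((ex k j : ℤ) : ℂ)) * this
    simp_rw [this]
    rw [Finset.sum_add_distrib, Finset.sum_add_distrib, ← Finset.mul_sum, ← Finset.mul_sum, e1, e2]
    simp
  · have := hp ε
    simp only [Prod.smul_mk, Prod.mk_add_mk] at this
    rw [this]; exact hpe


theorem LC_le_iSup (J : Finset (Fin n)) : LC blk ex J ≤ ⨆ i ∈ J, LC blk ex {i} := by
  refine Submodule.span_le.mpr ?_
  rintro v ⟨k, k', hk, hI, rfl⟩
  have h1 : LC blk ex {blk k} ≤ ⨆ i ∈ J, LC blk ex {i} :=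
    le_iSup₂ (f := fun i (_ : i ∈ J) => LC blk ex {i}) (blk k) hI
  exact h1 (Submodule.subset_span ⟨k, k', hk, rfl, rfl⟩)

/-- A singular system at which the Jacobian with one row replaced is nondegenerate. -/
theorem Good.exists_det_ne_zero (hg : Good blk ex) (i0 : Fin n) (v0 : Fin n → ℂ) (hv0 : v0 ≠ 0) :
    ∃ c : ι → ℂ, (∀ i, BS blk c i = 0) ∧ (∀ j, ∑ k, c k * ((ex k j : ℤ) : ℂ) = 0) ∧
      ((JM blk ex c).updateRow i0 v0).det ≠ 0 := by
  let L : Fin n → Submodule ℂ (Fin n → ℂ) :=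
    fun i => if i = i0 then Submodule.span ℂ {v0} else LC blk ex {i}
  have hLge : ∀ J : Finset (Fin n), i0 ∉ J → LC blk ex J ≤ ⨆ i ∈ J, L i := by
    intro J hJ
    refine (LC_le_iSup J).trans (le_of_eq ?_)
    refine iSup_congr fun i => iSup_congr fun hi => ?_
    have : i ≠ i0 := by rintro rfl; exact hJ hi
    simp [L, this]
  obtain ⟨ℓ, hℓ, hind⟩ := rado _ L rfl (by
    intro J
    by_cases h0 : i0 ∈ J
    · by_cases hJ : (J.erase i0).Nonempty
      · have h1 := hg.card_lt (J.erase i0) hJ (by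
          intro h
          have : i0 ∈ J.erase i0 := by rw [h]; simp
          simp at this)
        have h2 := Submodule.finrank_mono (hLge (J.erase i0) (by simp))
        have h3 : (⨆ i ∈ J.erase i0, L i) ≤ ⨆ i ∈ J, L i :=
          iSup₂_le fun i hi => le_iSup₂ (f := fun i (_ : i ∈ J) => L i) i (Finset.mem_of_mem_erase hi)
        have h4 := Submodule.finrank_mono h3
        have h5 := Finset.card_erase_add_one h0
        omega
      · have h1 : J = {i0} := by
          rw [Finset.not_nonempty_iff_eq_empty] at hJ
          rw [← Finset.insert_erase h0, hJ]
          simp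
        subst h1
        have e : (⨆ i ∈ ({i0} : Finset (Fin n)), L i) = Submodule.span ℂ {v0} := by simp [L]
        rw [e, finrank_span_singleton hv0]
        simp
    · by_cases hJ : J.Nonempty
      · exact ((hg.card_lt J hJ (by rintro rfl; simp at h0)).trans_le
          (Submodule.finrank_mono (hLge J h0))).le
      · rw [Finset.not_nonempty_iff_eq_empty] at hJ
        simp [hJ])
  have hex : ∀ i, ∃ c : ι → ℂ, (∀ k, blk k ≠ i → c k = 0) ∧ (∀ i, BS blk c i = 0) ∧
      ∀ j, ∑ k, c k * ((ex k j : ℤ) : ℂ) = if i = i0 then 0 else ℓ i j := by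
    intro i
    by_cases h : i = i0
    · exact ⟨0, by simp, by simp [BS], by simp [h]⟩
    · have h1 := hℓ i
      simp only [L, h, if_false] at h1
      obtain ⟨c, a1, a2, a3⟩ := exists_coeff (blk := blk) (ex := ex) {i} (fun _ => 1) (by simp) _ h1
      exact ⟨c, by simpa using a1, a2, by simpa [h] using a3⟩
  choose cc hcc1 hcc2 hcc3 using hex
  let c : ι → ℂ := fun k => cc (blk k) k
  have hJ : ∀ i j, JM blk ex c i j = if i = i0 then 0 else ℓ i j := by
    intro i j
    rw [← hcc3 i j]
    simp only [JM, Matrix.of_apply]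
    refine Finset.sum_congr rfl fun k _ => ?_
    by_cases h : blk k = i
    · simp [c, h]
    · simp [h, hcc1 i k h]
  have hs : Sing blk ex c (Pi.single i0 1) := by
    refine ⟨?_, ?_, ?_⟩
    · intro i
      rw [← hcc2 i i]
      refine Finset.sum_congr rfl fun k _ => ?_
      by_cases h : blk k = i
      · simp [c, h]
      · simp [h]
    · intro h
      have := congrFun h i0
      simp at this
    · intro j
      have h1 := hJ i0 j
      simp only [JM, Matrix.of_apply, if_true] at h1
      rw [← h1]
      refine Finset.sum_congr rfl fun k _ => ?_
      by_cases h : blk k = i0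
      · simp [h]
      · simp [h, Pi.single_apply]
  have hlp : LP (fun w : (ι → ℂ) × (Fin n → ℂ) => ((JM blk ex w.1).updateRow i0 v0).det) := by
    apply LP.det
    intro i j
    by_cases h : i = i0
    · subst h; simpa using LP.const (v0 j)
    · simp only [Matrix.updateRow_ne h]
      let f : (ι → ℂ) × (Fin n → ℂ) →ₗ[ℂ] ℂ :=
        { toFun := fun w => JM blk ex w.1 i j
          map_add' := by
            intro a b
            simp only [JM, Matrix.of_apply, Prod.fst_add, Pi.add_apply, ← Finset.sum_add_distrib]
            refine Finset.sum_congr rfl fun k _ => ?_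
            split_ifs <;> ring
          map_smul' := by
            intro a b
            simp only [JM, Matrix.of_apply, Prod.smul_fst, Pi.smul_apply, smul_eq_mul,
              RingHom.id_apply, Finset.mul_sum]
            refine Finset.sum_congr rfl fun k _ => ?_
            split_ifs <;> ring }
      exact LP.lin f
  have hdet : ((JM blk ex c).updateRow i0 v0).det ≠ 0 := by
    have h1 : (Matrix.of ℓ).det ≠ 0 := by
      have : LinearIndependent ℂ (Matrix.of ℓ).row := hind
      rw [Matrix.linearIndependent_rows_iff_isUnit, Matrix.isUnit_iff_isUnit_det] at this
      exact this.ne_zero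
    have h2 := hℓ i0
    simp only [L, if_true] at h2
    obtain ⟨t, ht⟩ := Submodule.mem_span_singleton.mp h2
    have h3 : Matrix.of ℓ = (JM blk ex c).updateRow i0 (t • v0) := by
      ext i j
      by_cases h : i = i0
      · subst h; simp [← ht]
      · rw [Matrix.updateRow_ne h, hJ]; simp [h]
    rw [h3, Matrix.det_updateRow_smul] at h1
    exact right_ne_zero_of_mul h1
  obtain ⟨c', l', hs', hl', hd'⟩ := hg.sup _ hlp _ c _ hs hdet rfl
  refine ⟨fun k => l' (blk k) * c' k, ?_, hs'.ker, ?_⟩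
  · intro i
    have : BS blk (fun k => l' (blk k) * c' k) i = l' i * BS blk c' i := by
      simp only [BS, Finset.mul_sum]
      refine Finset.sum_congr rfl fun k _ => ?_
      split_ifs with h
      · rw [h]
      · simp
    rw [this, hs'.sum, mul_zero]
  · have : (JM blk ex (fun k => l' (blk k) * c' k)).updateRow i0 v0 =
        Matrix.diagonal (Function.update l' i0 1) * (JM blk ex c').updateRow i0 v0 := by
      ext i j
      rw [Matrix.diagonal_mul]
      by_cases h : i = i0
      · subst h; simp
      · simp only [Matrix.updateRow_ne h, Function.update_of_ne h, JM, Matrix.of_apply,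
          Finset.mul_sum]
        refine Finset.sum_congr rfl fun k _ => ?_
        split_ifs with h
        · rw [h]; ring
        · simp
    rw [this, Matrix.det_mul, Matrix.det_diagonal]
    refine mul_ne_zero (Finset.prod_ne_zero_iff.mpr fun i _ => ?_) hd'
    by_cases h : i = i0
    · subst h; simp
    · simpa [h] using hl' i

end

section
variable {n : ℕ} {ι : Type} [Fintype ι] [DecidableEq ι] {blk : ι → Fin n} {ex : ι → Fin n → ℤ}

/-- A partition of the support into classes with affine indicator functions that separate
vectors makes the tuple linear. -/
theorem Good.essLin (hg : Good blk ex) {P : Type} [Fintype P] [DecidableEq P] (cl : ι → P)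
    (hcl : Function.Surjective cl) [Nonempty ι] (κ π : P → Fin n → ℂ)
    (hκ : ∀ α k, (if cl k = α then (1 : ℂ) else 0) =
      κ α (blk k) + ∑ j, ((ex k j : ℤ) : ℂ) * π α j)
    (hsp : ∀ u : Fin n → ℂ, (∀ α, ∑ j, u j * π α j = 0) → u = 0) :
    ∃ (φ : (Fin n → ℤ) ≃+ (Fin n → ℤ)) (v : Fin n → (Fin n → ℤ)),
      ∀ k, φ (ex k) + v (blk k) ∈ stdSimplexVertices n := by
  -- integrality of `π`
  have hinteg : ∀ (z : Fin n → ℤ) (α : P), ∃ m : ℤ, ∑ j, (z j : ℂ) * π α j = m := by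
    let L : Submodule ℤ (Fin n → ℤ) :=
      { carrier := {z | ∀ α : P, ∃ m : ℤ, ∑ j, (z j : ℂ) * π α j = m}
        add_mem' := by
          intro a b ha hb α
          obtain ⟨m, hm⟩ := ha α
          obtain ⟨m', hm'⟩ := hb α
          exact ⟨m + m', by simp [add_mul, Finset.sum_add_distrib, hm, hm']⟩
        zero_mem' := by intro α; exact ⟨0, by simp⟩
        smul_mem' := by
          intro t a ha α
          obtain ⟨m, hm⟩ := ha α
          exact ⟨t * m, by simp [mul_assoc, ← Finset.mul_sum, hm]⟩ }
    have hL : L = ⊤ := by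
      apply hg.red
      intro k k' hk α
      have h1 := hκ α k
      have h2 := hκ α k'
      rw [hk] at h1
      refine ⟨(if cl k = α then 1 else 0) - (if cl k' = α then 1 else 0), ?_⟩
      push_cast
      rw [h1, h2]
      simp [sub_mul]
    intro z
    have : z ∈ L := by rw [hL]; trivial
    exact this
  have hM : ∀ α j, ∃ m : ℤ, π α j = m := by
    intro α j
    obtain ⟨m, hm⟩ := hinteg (Pi.single j 1) α
    refine ⟨m, ?_⟩
    rw [← hm]
    rw [Finset.sum_eq_single j]
    · simp
    · intro b _ hb; simp [hb]
    · simp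
  choose M hM using hM
  let Φ : (Fin n → ℤ) →ₗ[ℤ] (P → ℤ) := Matrix.mulVecLin (Matrix.of M)
  have hΦc : ∀ z α, ((Φ z α : ℤ) : ℂ) = ∑ j, (z j : ℂ) * π α j := by
    intro z α
    simp only [Φ, Matrix.mulVecLin_apply, Matrix.mulVec, dotProduct, Matrix.of_apply]
    push_cast
    exact Finset.sum_congr rfl fun j _ => by rw [hM]; ring
  have hdiff : ∀ k k', blk k = blk k' →
      Φ (ex k - ex k') = Pi.single (cl k) 1 - Pi.single (cl k') 1 := by
    intro k k' hk
    ext α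
    have h1 := hκ α k
    have h2 := hκ α k'
    rw [hk] at h1
    have : ((Φ (ex k - ex k') α : ℤ) : ℂ) =
        (((Pi.single (cl k) 1 - Pi.single (cl k') 1 : P → ℤ) α : ℤ) : ℂ) := by
      rw [hΦc]
      simp only [Pi.sub_apply, Int.cast_sub, sub_mul, Finset.sum_sub_distrib, Pi.single_apply]
      have e : ∑ j, ((ex k j : ℤ) : ℂ) * π α j - ∑ j, ((ex k' j : ℤ) : ℂ) * π α j =
        (if cl k = α then (1 : ℂ) else 0) - (if cl k' = α then (1 : ℂ) else 0) := by
        rw [h1, h2]; ring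
      rw [e]
      push_cast
      simp only [eq_comm]
    exact_mod_cast this
  have hinj : Function.Injective Φ := by
    rw [← LinearMap.ker_eq_bot, LinearMap.ker_eq_bot']
    intro z hz
    have := hsp (fun j => (z j : ℂ)) (by
      intro α
      rw [← hΦc, hz]; simp)
    ext j
    have h3 : (z j : ℂ) = 0 := congrFun this j
    simpa using h3
  have hsum : ∀ z, ∑ α, Φ z α = 0 := by
    let S : (P → ℤ) →ₗ[ℤ] ℤ := ∑ α, LinearMap.proj α
    have hS : ∀ w, S w = ∑ α, w α := by intro w; simp [S]
    have : LinearMap.ker (S ∘ₗ Φ) = ⊤ := by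
      apply hg.red
      intro k k' hk
      rw [LinearMap.mem_ker, LinearMap.comp_apply, hdiff k k' hk, hS]
      simp [Finset.sum_sub_distrib]
    intro z
    rw [← hS]
    have h : z ∈ LinearMap.ker (S ∘ₗ Φ) := by rw [this]; trivial
    exact h
  obtain ⟨k0⟩ := ‹Nonempty ι›
  let α0 := cl k0
  let C : Set P := {α | ∃ z, Φ z = Pi.single α 1 - Pi.single α0 1}
  have hCC : ∀ k k', blk k = blk k' → cl k ∈ C → cl k' ∈ C := by
    rintro k k' hk ⟨z, hz⟩
    refine ⟨z + (ex k' - ex k), ?_⟩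
    rw [map_add, hz, hdiff k' k hk.symm]
    abel
  have h0C : α0 ∈ C := ⟨0, by simp⟩
  have hC : ∀ α, α ∈ C := by
    by_contra hcon
    push Not at hcon
    obtain ⟨α1, hα1⟩ := hcon
    obtain ⟨k1, rfl⟩ := hcl α1
    classical
    let I : Finset (Fin n) := Finset.univ.filter fun i => ∃ k, blk k = i ∧ cl k ∈ C
    have hI0 : blk k0 ∈ I := by simp only [I, Finset.mem_filter, Finset.mem_univ, true_and]; exact ⟨k0, rfl, h0C⟩
    have hI1 : blk k1 ∉ I := by
      simp only [I, Finset.mem_filter, Finset.mem_univ, true_and]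
      rintro ⟨k, hk, hkC⟩
      exact hα1 (hCC k k1 hk hkC)
    have hIC : ∀ k, blk k ∈ I → cl k ∈ C := by
      intro k hk
      simp only [I, Finset.mem_filter, Finset.mem_univ, true_and] at hk
      obtain ⟨k', hk', hC'⟩ := hk
      exact hCC k' k hk' hC'
    have hIC' : ∀ k, blk k ∉ I → cl k ∉ C := by
      intro k hk hkC
      exact hk (by simp only [I, Finset.mem_filter, Finset.mem_univ, true_and]; exact ⟨k, rfl, hkC⟩)
    let LL : Set P → Submodule ℤ (Fin n → ℤ) := fun D =>
      { carrier := {z | ∀ α ∉ D, Φ z α = 0}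
        add_mem' := by intro a b ha hb α hα; simp [ha α hα, hb α hα]
        zero_mem' := by intro α _; simp
        smul_mem' := by intro t a ha α hα; rw [map_smul, Pi.smul_apply, ha α hα, smul_zero] }
    have e1 := hg.irr I (LL C) ⟨_, hI0⟩ (by rintro h; rw [h] at hI1; simp at hI1) (by
      intro k k' hk hkI α hα
      rw [hdiff k k' hk]
      have a1 := hIC k hkI
      have a2 := hIC k' (hk ▸ hkI)
      have b1 : α ≠ cl k := by rintro rfl; exact hα a1
      have b2 : α ≠ cl k' := by rintro rfl; exact hα a2
      simp [b1, b2])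
    have e2 := hg.irr Iᶜ (LL Cᶜ) ⟨blk k1, by simpa using hI1⟩
      (by rintro h
          have : blk k0 ∈ Iᶜ := by rw [h]; simp
          simp at this
          exact this hI0) (by
      intro k k' hk hkI α hα
      rw [Finset.mem_compl] at hkI
      rw [hdiff k k' hk]
      have a1 := hIC' k hkI
      have a2 := hIC' k' (hk ▸ hkI)
      have hα' : α ∈ C := by simpa using hα
      have b1 : α ≠ cl k := by rintro rfl; exact a1 hα'
      have b2 : α ≠ cl k' := by rintro rfl; exact a2 hα'
      simp [b1, b2])
    have hdis : Disjoint (LL C) (LL Cᶜ) := by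
      rw [Submodule.disjoint_def]
      intro z h1 h2
      apply hinj
      rw [map_zero]
      ext α
      by_cases hα : α ∈ C
      · exact h2 α (by simpa using hα)
      · exact h1 α hα
    have hcop : Function.Injective ((LL C).subtype.coprod (LL Cᶜ).subtype) := by
      rw [← LinearMap.ker_eq_bot, LinearMap.ker_coprod_of_disjoint_range]
      · simp
      · simpa using hdis
    have e3 := LinearMap.finrank_le_finrank_of_injective hcop
    rw [Module.finrank_prod] at e3
    rw [Module.finrank_fin_fun] at e3
    have e4 := Finset.card_add_card_compl I
    rw [Fintype.card_fin] at e4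
    omega
  choose gz hgz using hC
  let P' := {α : P // α ≠ α0}
  let Ψ : (Fin n → ℤ) →ₗ[ℤ] (P' → ℤ) := LinearMap.pi fun α => LinearMap.proj α.1 ∘ₗ Φ
  have hΨ : ∀ z (α : P'), Ψ z α = Φ z α.1 := fun z α => rfl
  have hΨinj : Function.Injective Ψ := by
    rw [← LinearMap.ker_eq_bot, LinearMap.ker_eq_bot']
    intro z hz
    have hz' : ∀ α, α ≠ α0 → Φ z α = 0 := fun α hα => by
      rw [← hΨ z ⟨α, hα⟩, hz]; rfl
    apply hinj
    rw [map_zero]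
    ext α
    by_cases h : α = α0
    · have := hsum z
      rw [Finset.sum_eq_single α0 (fun b _ hb => hz' b hb) (by simp)] at this
      rw [h, this]; rfl
    · exact hz' α h
  have hΨsurj : Function.Surjective Ψ := by
    intro w
    refine ⟨∑ α : P', w α • gz α.1, ?_⟩
    ext β
    rw [map_sum, Finset.sum_apply]
    rw [Finset.sum_eq_single β]
    · rw [map_smul, Pi.smul_apply, hΨ, hgz]
      simp [β.2]
    · intro α _ hα
      rw [map_smul, Pi.smul_apply, hΨ, hgz]
      have : β.1 ≠ α.1 := fun h => hα (Subtype.ext h.symm)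
      simp [β.2, this]
    · simp
  let e : (Fin n → ℤ) ≃ₗ[ℤ] (P' → ℤ) := LinearEquiv.ofBijective Ψ ⟨hΨinj, hΨsurj⟩
  have hcard : Fintype.card P' = n := by
    have := e.finrank_eq
    rw [Module.finrank_fin_fun, Module.finrank_fintype_fun_eq_card] at this
    exact this.symm
  let r : P' ≃ Fin n := Fintype.equivFinOfCardEq hcard
  let φ : (Fin n → ℤ) ≃ₗ[ℤ] (Fin n → ℤ) := e.trans (LinearEquiv.funCongrLeft ℤ ℤ r.symm)
  have hφ : ∀ z i, φ z i = Φ z (r.symm i).1 := fun z i => rfl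
  choose kk hkk using hg.surj
  let E : P → Fin n → ℤ := fun α i => if (r.symm i).1 = α then 1 else 0
  refine ⟨φ.toAddEquiv, fun i => E (cl (kk i)) - φ (ex (kk i)), fun k => ?_⟩
  have h1 : φ.toAddEquiv (ex k) + (E (cl (kk (blk k))) - φ (ex (kk (blk k)))) = E (cl k) := by
    have h2 : φ (ex k - ex (kk (blk k))) = E (cl k) - E (cl (kk (blk k))) := by
      ext i
      rw [hφ, hdiff _ _ (hkk (blk k)).symm]
      simp [E, Pi.single_apply]
    rw [map_sub] at h2
    change φ (ex k) + _ = _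
    rw [sub_eq_iff_eq_add.mp h2]
    abel
  simp only [h1]
  by_cases h : cl k = α0
  · left
    ext i
    have : (r.symm i).1 ≠ cl k := by rw [h]; exact (r.symm i).2
    simp [E, this]
  · right
    refine ⟨r ⟨cl k, h⟩, ?_⟩
    ext i
    simp only [E, Pi.single_apply]
    congr 1
    rw [eq_iff_iff, ← Equiv.symm_apply_eq, Subtype.ext_iff]
end

/-- The space of systems for which `1` is a singular root with null vector `(1,…,1)`. -/
def Uperp {n : ℕ} {ι : Type} [Fintype ι] (blk : ι → Fin n) (ex : ι → Fin n → ℤ) :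
    Submodule ℂ (ι → ℂ) where
  carrier := {c | (∀ i, BS blk c i = 0) ∧ ∀ j, ∑ k, c k * ((ex k j : ℤ) : ℂ) = 0}
  add_mem' := by
    intro a b ha hb
    refine ⟨fun i => ?_, fun j => ?_⟩
    · have e1 := ha.1 i
      have e2 := hb.1 i
      simp only [BS, ← Finset.sum_filter] at e1 e2 ⊢
      simp [Finset.sum_add_distrib, e1, e2]
    · simp [add_mul, Finset.sum_add_distrib, ha.2 j, hb.2 j]
  zero_mem' := ⟨by simp [BS], by simp⟩
  smul_mem' := by
    intro t a ha
    refine ⟨fun i => ?_, fun j => ?_⟩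
    · have e1 := ha.1 i
      simp only [BS, ← Finset.sum_filter] at e1 ⊢
      simp [← Finset.mul_sum, e1]
    · simp [mul_assoc, ← Finset.mul_sum, ha.2 j]

/-- Being orthogonal to the columns of the matrix of the tuple. -/
def AnnT {n : ℕ} {ι R : Type} [Fintype ι] [CommRing R] (blk : ι → Fin n) (ex : ι → Fin n → ℤ)
    (g : ι → R) : Prop :=
  (∀ i, BS blk g i = 0) ∧ ∀ j, ∑ k, g k * ((ex k j : ℤ) : R) = 0

section
variable {n : ℕ} {ι : Type} [Fintype ι] [DecidableEq ι] {blk : ι → Fin n} {ex : ι → Fin n → ℤ}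

theorem sum_BS {R : Type} [CommRing R] (g : ι → R) (z : Fin n → R) :
    ∑ k, g k * z (blk k) = ∑ i, z i * BS blk g i := by
  simp only [BS, Finset.mul_sum]
  rw [Finset.sum_comm]
  refine Finset.sum_congr rfl fun k _ => ?_
  rw [Finset.sum_eq_single (blk k)]
  · simp [mul_comm]
  · intro b _ hb; simp [Ne.symm hb]
  · simp

theorem AnnT.apply {R : Type} [CommRing R] {g : ι → R} (hg : AnnT blk ex g) (z y : Fin n → R) :
    ∑ k, g k * (z (blk k) + ∑ j, ((ex k j : ℤ) : R) * y j) = 0 := by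
  simp only [mul_add, Finset.sum_add_distrib]
  rw [sum_BS]
  simp only [hg.1, mul_zero, Finset.sum_const_zero, zero_add, Finset.mul_sum]
  rw [Finset.sum_comm]
  refine Finset.sum_eq_zero fun j _ => ?_
  rw [← zero_mul (y j), ← hg.2 j, Finset.sum_mul]
  exact Finset.sum_congr rfl fun k _ => by ring

/-- Double annihilator. -/
theorem exists_affine (w : ι → ℂ) (hw : ∀ c ∈ Uperp blk ex, ∑ k, c k * w k = 0) :
    ∃ z y : Fin n → ℂ, ∀ k, w k = z (blk k) + ∑ j, ((ex k j : ℤ) : ℂ) * y j := by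
  let W : Submodule ℂ (ι → ℂ) :=
    { carrier := {w | ∃ z y : Fin n → ℂ, ∀ k, w k = z (blk k) + ∑ j, ((ex k j : ℤ) : ℂ) * y j}
      add_mem' := by
        rintro a b ⟨z, y, h⟩ ⟨z', y', h'⟩
        refine ⟨z + z', y + y', fun k => ?_⟩
        simp [h k, h' k, mul_add, Finset.sum_add_distrib]
        ring
      zero_mem' := ⟨0, 0, by simp⟩
      smul_mem' := by
        rintro t a ⟨z, y, h⟩
        refine ⟨t • z, t • y, fun k => ?_⟩
        simp [h k, mul_add, Finset.mul_sum]
        exact Finset.sum_congr rfl fun j _ => by ring }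
  change w ∈ W
  by_contra hc
  obtain ⟨f, hf, hf'⟩ := Submodule.exists_le_ker_of_notMem hc
  let c : ι → ℂ := fun k => f (Pi.single k 1)
  have hfc : ∀ u : ι → ℂ, f u = ∑ k, c k * u k := by
    intro u
    conv_lhs => rw [← Finset.univ_sum_single u]
    rw [map_sum]
    refine Finset.sum_congr rfl fun k _ => ?_
    have : (Pi.single k (u k) : ι → ℂ) = u k • Pi.single k 1 := by
      rw [← Pi.single_smul]; simp
    rw [this, map_smul, smul_eq_mul, mul_comm]
  have hcU : c ∈ Uperp blk ex := by
    refine ⟨fun i => ?_, fun j => ?_⟩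
    · have h1 : (fun k => if blk k = i then (1 : ℂ) else 0) ∈ W :=
        ⟨Pi.single i 1, 0, by intro k; simp [Pi.single_apply]⟩
      have h2 : f _ = 0 := hf' h1
      rw [hfc] at h2
      simpa [BS] using h2
    · have h1 : (fun k => ((ex k j : ℤ) : ℂ)) ∈ W :=
        ⟨0, Pi.single j 1, by intro k; simp [Pi.single_apply]⟩
      have h2 : f _ = 0 := hf' h1
      rw [hfc] at h2
      exact h2
  exact hf (by rw [hfc]; exact hw c hcU)

theorem Good.finrank_Uperp (hg : Good blk ex) :
    Module.finrank ℂ (Uperp blk ex) + 2 * n ≤ Fintype.card ι := by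
  let T : ((Fin n → ℂ) × (Fin n → ℂ)) →ₗ[ℂ] (ι → ℂ) :=
    { toFun := fun zy k => zy.1 (blk k) + ∑ j, ((ex k j : ℤ) : ℂ) * zy.2 j
      map_add' := by
        intro a b; ext k
        simp [mul_add, Finset.sum_add_distrib]
        ring
      map_smul' := by
        intro t a; ext k
        simp [mul_add, Finset.mul_sum]
        exact Finset.sum_congr rfl fun j _ => by ring }
  have hT : Function.Injective T := by
    rw [← LinearMap.ker_eq_bot, LinearMap.ker_eq_bot']
    rintro ⟨z, y⟩ h
    have hk : ∀ k, z (blk k) + ∑ j, ((ex k j : ℤ) : ℂ) * y j = 0 := fun k => congrFun h k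
    let F : (Fin n → ℤ) →ₗ[ℤ] ℂ :=
      { toFun := fun a => ∑ j, (a j : ℂ) * y j
        map_add' := by intro a b; simp [add_mul, Finset.sum_add_distrib]
        map_smul' := by intro a b; simp [mul_assoc, Finset.mul_sum] }
    have hF : LinearMap.ker F = ⊤ := by
      apply hg.red
      intro k k' hkk
      rw [LinearMap.mem_ker, map_sub]
      have h1 := hk k
      have h2 := hk k'
      rw [hkk] at h1
      change ∑ j, ((ex k j : ℤ) : ℂ) * y j - ∑ j, ((ex k' j : ℤ) : ℂ) * y j = 0
      linear_combination h1 - h2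
    have hy : y = 0 := by
      ext j
      have : (Pi.single j 1 : Fin n → ℤ) ∈ LinearMap.ker F := by rw [hF]; trivial
      have h2 : ∑ i, (((Pi.single j 1 : Fin n → ℤ) i : ℤ) : ℂ) * y i = 0 := this
      rw [Finset.sum_eq_single j] at h2
      · simpa using h2
      · intro b _ hb; simp [hb]
      · simp
    have hz : z = 0 := by
      ext i
      obtain ⟨k, rfl⟩ := hg.surj i
      have := hk k
      simpa [hy] using this
    rw [hy, hz]; rfl
  -- pairing
  let B : (Uperp blk ex) →ₗ[ℂ] Module.Dual ℂ (ι → ℂ) :=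
    (Fintype.linearCombination ℂ fun k => (LinearMap.proj k : (ι → ℂ) →ₗ[ℂ] ℂ)) ∘ₗ
      (Uperp blk ex).subtype
  have hB : ∀ c u, B c u = ∑ k, c.1 k * u k := by
    intro c u
    simp [B, Fintype.linearCombination_apply]
  have hBinj : Function.Injective B := by
    rw [← LinearMap.ker_eq_bot, LinearMap.ker_eq_bot']
    intro c hc
    ext k
    have := LinearMap.congr_fun hc (Pi.single k 1)
    rw [hB] at this
    simpa [Pi.single_apply] using this
  have hBr : LinearMap.range B ≤ (LinearMap.range T).dualAnnihilator := by
    rintro _ ⟨c, rfl⟩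
    rw [Submodule.mem_dualAnnihilator]
    rintro _ ⟨⟨z, y⟩, rfl⟩
    rw [hB]
    exact AnnT.apply (g := c.1) ⟨c.2.1, c.2.2⟩ z y
  have e1 := Submodule.finrank_mono hBr
  rw [LinearMap.finrank_range_of_inj hBinj] at e1
  have e2 := Subspace.finrank_add_finrank_dualAnnihilator_eq (LinearMap.range T)
  rw [LinearMap.finrank_range_of_inj hT, Module.finrank_prod, Module.finrank_fin_fun,
    Module.finrank_fintype_fun_eq_card] at e2
  omega

/-- The basis of `Uperp`. -/
noncomputable def cb (blk : ι → Fin n) (ex : ι → Fin n → ℤ)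
    (l : Fin (Module.finrank ℂ (Uperp blk ex))) (k : ι) : ℂ :=
  (Module.finBasis ℂ (Uperp blk ex) l).1 k

theorem cb_mem (l) : cb blk ex l ∈ Uperp blk ex := (Module.finBasis ℂ (Uperp blk ex) l).2

theorem exists_cb (c : ι → ℂ) (hc : c ∈ Uperp blk ex) :
    ∃ s : Fin (Module.finrank ℂ (Uperp blk ex)) → ℂ, ∀ k, c k = ∑ l, s l * cb blk ex l k := by
  refine ⟨(Module.finBasis ℂ (Uperp blk ex)).repr ⟨c, hc⟩, fun k => ?_⟩
  have := (Module.finBasis ℂ (Uperp blk ex)).sum_repr ⟨c, hc⟩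
  have h2 := congrFun (congrArg Subtype.val this) k
  simp only [AddSubmonoidClass.coe_finsetSum, Finset.sum_apply, Submodule.coe_smul, Pi.smul_apply,
    smul_eq_mul] at h2
  exact h2.symm

/-- The parameter ring. -/
abbrev PR (κ : Type) (blk : ι → Fin n) (ex : ι → Fin n → ℤ) :=
  MvPolynomial (κ ⊕ Fin (Module.finrank ℂ (Uperp blk ex))) ℂ

/-- The generic element of `Uperp`. -/
noncomputable def gc (κ : Type) (blk : ι → Fin n) (ex : ι → Fin n → ℤ) (k : ι) : PR κ blk ex :=
  ∑ l, MvPolynomial.X (Sum.inr l) * MvPolynomial.C (cb blk ex l k)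

/-- Orthogonality to `Uperp`. -/
def Perp {κ : Type} {blk : ι → Fin n} {ex : ι → Fin n → ℤ} (w : ι → PR κ blk ex) : Prop :=
  ∀ l, ∑ k, MvPolynomial.C (cb blk ex l k) * w k = 0

theorem Perp.pair {κ : Type} {w g : ι → PR κ blk ex} (hw : Perp w) (hg : AnnT blk ex g) :
    ∑ k, g k * w k = 0 := by
  classical
  have hc : ∀ m, ∃ z y : Fin n → ℂ, ∀ k, MvPolynomial.coeff m (w k) =
      z (blk k) + ∑ j, ((ex k j : ℤ) : ℂ) * y j := by
    intro m
    apply exists_affine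
    intro c hcU
    obtain ⟨s, hs⟩ := exists_cb c hcU
    have h1 : ∀ l, ∑ k, cb blk ex l k * MvPolynomial.coeff m (w k) = 0 := by
      intro l
      have := congrArg (MvPolynomial.coeff m) (hw l)
      simpa [MvPolynomial.coeff_sum, MvPolynomial.coeff_C_mul] using this
    simp_rw [hs, Finset.sum_mul]
    rw [Finset.sum_comm]
    refine Finset.sum_eq_zero fun l _ => ?_
    rw [← mul_zero (s l), ← h1 l, Finset.mul_sum]
    exact Finset.sum_congr rfl fun k _ => by ring
  choose z y hzy using hc
  let M := Finset.univ.biUnion fun k => (w k).support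
  have hwM : ∀ k, w k = ∑ m ∈ M, MvPolynomial.C (MvPolynomial.coeff m (w k)) *
      MvPolynomial.monomial m 1 := by
    intro k
    conv_lhs => rw [MvPolynomial.as_sum (w k)]
    rw [Finset.sum_subset (Finset.subset_biUnion_of_mem (fun k => (w k).support) (Finset.mem_univ k))]
    · exact Finset.sum_congr rfl fun m _ => by rw [MvPolynomial.C_mul_monomial, mul_one]
    · intro m _ hm
      rw [MvPolynomial.notMem_support_iff] at hm
      rw [hm]; simp
  have h2 : ∑ k, g k * w k = ∑ m ∈ M, MvPolynomial.monomial m 1 *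
      ∑ k, g k * MvPolynomial.C (MvPolynomial.coeff m (w k)) := by
    simp_rw [Finset.mul_sum]
    rw [Finset.sum_comm]
    refine Finset.sum_congr rfl fun k _ => ?_
    conv_lhs => rw [hwM k]
    rw [Finset.mul_sum]
    exact Finset.sum_congr rfl fun m _ => by ring
  rw [h2]
  refine Finset.sum_eq_zero fun m _ => ?_
  have h3 := hg.apply (fun i => MvPolynomial.C (z m i)) (fun j => MvPolynomial.C (y m j))
  have h4 : ∀ k, MvPolynomial.C (MvPolynomial.coeff m (w k)) =
      (MvPolynomial.C (z m (blk k)) + ∑ j, ((ex k j : ℤ) : PR κ blk ex) * MvPolynomial.C (y m j)) := by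
    intro k
    rw [hzy]
    simp
  simp_rw [h4, h3, mul_zero]

theorem Perp.of_AnnT_all {κ : Type} (z : Fin n → PR κ blk ex) :
    Perp (fun k => z (blk k)) := by
  intro l
  have h1 := (cb_mem (blk := blk) (ex := ex) l).1
  have h2 : ∀ i, BS blk (fun k => (MvPolynomial.C (cb blk ex l k) : PR κ blk ex)) i = 0 := by
    intro i
    have := congrArg (MvPolynomial.C : ℂ → PR κ blk ex) (h1 i)
    simpa [BS, apply_ite] using this
  have := sum_BS (blk := blk) (fun k => (MvPolynomial.C (cb blk ex l k) : PR κ blk ex)) z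
  rw [this]
  simp [h2]

theorem pderiv_gc {κ : Type} (l) (k : ι) :
    MvPolynomial.pderiv (Sum.inr l) (gc κ blk ex k) = MvPolynomial.C (cb blk ex l k) := by
  classical
  simp only [gc, map_sum, Derivation.leibniz, MvPolynomial.pderiv_C, smul_zero, zero_add,
    MvPolynomial.pderiv_X]
  rw [Finset.sum_eq_single l]
  · simp
  · intro b _ hb
    simp [Pi.single_apply, hb]
  · simp

theorem AnnT.pderiv {κ : Type} {g : ι → PR κ blk ex} (hg : AnnT blk ex g) (t) :
    AnnT blk ex (fun k => MvPolynomial.pderiv t (g k)) := by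
  refine ⟨fun i => ?_, fun j => ?_⟩
  · have := congrArg (MvPolynomial.pderiv t) (hg.1 i)
    simp only [BS, ← Finset.sum_filter, map_sum, map_zero] at this ⊢
    exact this
  · have := congrArg (MvPolynomial.pderiv t) (hg.2 j)
    simp only [map_sum, map_zero, Derivation.leibniz] at this
    rw [← this]
    refine Finset.sum_congr rfl fun k _ => ?_
    have h0 : MvPolynomial.pderiv t (((ex k j : ℤ)) : PR κ blk ex) = 0 := by
      rw [← map_intCast (MvPolynomial.C : ℂ →+* PR κ blk ex)]
      exact MvPolynomial.pderiv_C
    rw [h0]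
    simp [mul_comm]

theorem annT_gc {κ : Type} : AnnT blk ex (gc κ blk ex) := by
  have h := fun l => cb_mem (blk := blk) (ex := ex) l
  refine ⟨fun i => ?_, fun j => ?_⟩
  · simp only [BS, ← Finset.sum_filter, gc]
    rw [Finset.sum_comm]
    refine Finset.sum_eq_zero fun l _ => ?_
    have := (h l).1 i
    simp only [BS, ← Finset.sum_filter] at this
    rw [← Finset.mul_sum, ← map_sum, this]
    simp
  · simp only [gc, Finset.sum_mul]
    rw [Finset.sum_comm]
    refine Finset.sum_eq_zero fun l _ => ?_
    have := congrArg (MvPolynomial.C : ℂ → PR κ blk ex) ((h l).2 j)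
    simp only [map_sum, map_mul, map_intCast, map_zero] at this
    simp_rw [mul_assoc]
    rw [← Finset.mul_sum, this, mul_zero]

/-- Powers. -/
theorem Perp.pow {κ : Type} {h : ι → PR κ blk ex} (h1 : Perp h)
    (h2 : AnnT blk ex (fun k => gc κ blk ex k * h k)) (m : ℕ) : Perp (fun k => h k ^ m) := by
  induction m with
  | zero =>
    have := Perp.of_AnnT_all (κ := κ) (blk := blk) (ex := ex) (fun _ => 1)
    simpa using this
  | succ m ih =>
    rcases Nat.eq_zero_or_pos m with rfl | hm
    · simpa using h1
    intro l
    have e1 := ih.pair (h2.pderiv (Sum.inr l))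
    have hD : Perp (fun k => h k ^ (m - 1) * MvPolynomial.pderiv (Sum.inr l) (h k)) := by
      intro l'
      have := congrArg (MvPolynomial.pderiv (Sum.inr l)) (ih l')
      simp only [map_sum, map_zero, Derivation.leibniz, MvPolynomial.pderiv_C, smul_zero,
        Derivation.leibniz_pow, add_zero, smul_eq_mul, nsmul_eq_mul] at this
      have h5 : (m : PR κ blk ex) * ∑ k, MvPolynomial.C (cb blk ex l' k) *
          (h k ^ (m - 1) * MvPolynomial.pderiv (Sum.inr l) (h k)) = 0 := by
        rw [← this, Finset.mul_sum]
        exact Finset.sum_congr rfl fun k _ => by ring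
      rcases mul_eq_zero.mp h5 with h6 | h6
      · exfalso
        have : m = 0 := by exact_mod_cast h6
        omega
      · exact h6
    have e2 := hD.pair h2
    simp only [Derivation.leibniz, pderiv_gc, smul_eq_mul] at e1
    have e3 : ∑ k, MvPolynomial.C (cb blk ex l k) * h k ^ (m + 1) +
        ∑ k, gc κ blk ex k * h k * (h k ^ (m - 1) * MvPolynomial.pderiv (Sum.inr l) (h k)) = 0 := by
      rw [← e1, ← Finset.sum_add_distrib]
      refine Finset.sum_congr rfl fun k _ => ?_
      obtain ⟨r, rfl⟩ : ∃ r, m = r + 1 := ⟨m - 1, by omega⟩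
      simp only [Nat.add_sub_cancel]
      ring
    rw [e2, add_zero] at e3
    exact e3

end

section
variable {n : ℕ} {ι : Type} [Fintype ι] [DecidableEq ι] {blk : ι → Fin n} {ex : ι → Fin n → ℤ}

theorem eval_gc {κ : Type} (s : κ ⊕ Fin (Module.finrank ℂ (Uperp blk ex)) → ℂ) (k : ι) :
    MvPolynomial.eval s (gc κ blk ex k) = ∑ l, s (Sum.inr l) * cb blk ex l k := by
  simp [gc]

theorem Perp.polyEval {κ : Type} {h : ι → PR κ blk ex} (h1 : Perp h)
    (h2 : AnnT blk ex (fun k => gc κ blk ex k * h k)) (q : Polynomial (PR κ blk ex)) :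
    Perp (fun k => q.eval (h k)) := by
  intro l
  simp only [Polynomial.eval_eq_sum_range, Finset.mul_sum]
  rw [Finset.sum_comm]
  refine Finset.sum_eq_zero fun m _ => ?_
  have := h1.pow h2 m l
  simp only at this
  rw [← mul_zero (q.coeff m), ← this, Finset.mul_sum]
  exact Finset.sum_congr rfl fun k _ => by ring

theorem indicator_affine {κ : Type} [DecidableEq (PR κ blk ex)] {h : ι → PR κ blk ex} (h1 : Perp h)
    (h2 : AnnT blk ex (fun k => gc κ blk ex k * h k)) (α : PR κ blk ex) :
    ∃ z y : Fin n → ℂ, ∀ k, (if h k = α then (1 : ℂ) else 0) =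
      z (blk k) + ∑ j, ((ex k j : ℤ) : ℂ) * y j := by
  let F := Finset.univ.image h
  let q : Polynomial (PR κ blk ex) := ∏ β ∈ F.erase α, (Polynomial.X - Polynomial.C β)
  have hq : ∀ k, q.eval (h k) = q.eval α * (if h k = α then 1 else 0) := by
    intro k
    by_cases hk : h k = α
    · simp [hk]
    · rw [if_neg hk, mul_zero]
      simp only [q, Polynomial.eval_prod]
      apply Finset.prod_eq_zero (i := h k)
      · simp [F, hk]
      · simp
  have hE : q.eval α ≠ 0 := by
    simp only [q, Polynomial.eval_prod]
    rw [Finset.prod_ne_zero_iff]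
    intro β hβ
    simp only [Polynomial.eval_sub, Polynomial.eval_X, Polynomial.eval_C]
    exact sub_ne_zero.mpr (Finset.ne_of_mem_erase hβ).symm
  apply exists_affine
  intro c hc
  obtain ⟨s, hs⟩ := exists_cb c hc
  have h3 : ∀ l, ∑ k, cb blk ex l k * (if h k = α then (1 : ℂ) else 0) = 0 := by
    intro l
    have := Perp.polyEval h1 h2 q l
    simp only [hq] at this
    have h4 : q.eval α * MvPolynomial.C (∑ k, cb blk ex l k * (if h k = α then (1 : ℂ) else 0)) = 0 := by
      rw [← this, map_sum, Finset.mul_sum]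
      refine Finset.sum_congr rfl fun k _ => ?_
      by_cases hk : h k = α
      · simp [hk]; ring
      · simp [hk]
    rcases mul_eq_zero.mp h4 with h5 | h5
    · exact absurd h5 hE
    · exact (MvPolynomial.C_eq_zero).mp h5
  simp_rw [hs, Finset.sum_mul]
  rw [Finset.sum_comm]
  refine Finset.sum_eq_zero fun l _ => ?_
  refine Eq.trans ?_ (mul_zero (s l))
  refine Eq.trans ?_ (congrArg (s l * ·) (h3 l))
  simp only [Finset.mul_sum]
  exact Finset.sum_congr rfl fun k _ => by ring

theorem Good.det_gc_ne_zero {κ : Type} (hg : Good blk ex) (i0 : Fin n) (v0 : Fin n → ℂ) (hv0 : v0 ≠ 0) :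
    ((JM blk ex (gc κ blk ex)).updateRow i0 (fun j => MvPolynomial.C (v0 j))).det ≠ 0 := by
  obtain ⟨c, hc1, hc2, hdet⟩ := hg.exists_det_ne_zero i0 v0 hv0
  obtain ⟨s, hs⟩ := exists_cb (blk := blk) (ex := ex) c ⟨hc1, hc2⟩
  intro h0
  apply hdet
  have := congrArg (MvPolynomial.eval (Sum.elim (fun _ : κ => (0 : ℂ)) s)) h0
  rw [RingHom.map_det, map_zero] at this
  rw [← this]
  congr 1
  ext i j
  simp only [RingHom.mapMatrix_apply, Matrix.map_apply, Matrix.updateRow_apply]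
  by_cases hi : i = i0
  · simp [hi]
  · simp only [hi, if_false, JM, Matrix.of_apply, map_sum, apply_ite (MvPolynomial.eval _),
      map_mul, map_zero, map_intCast, eval_gc, Sum.elim_inr]
    simp only [hs]

/-- Theorem A. -/
theorem Good.const_of_perp {κ : Type} (hg : Good blk ex) (i0 : Fin n)
    (hlin : ¬ ∃ (φ : (Fin n → ℤ) ≃+ (Fin n → ℤ)) (v : Fin n → (Fin n → ℤ)),
      ∀ k, φ (ex k) + v (blk k) ∈ stdSimplexVertices n)
    {h : ι → PR κ blk ex} (h1 : Perp h)
    (h2 : AnnT blk ex (fun k => gc κ blk ex k * h k)) : ∀ k k', h k = h k' := by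
  classical
  let F := Finset.univ.image h
  let P : Type := {p // p ∈ F}
  let cl : ι → P := fun k => ⟨h k, by simp [F]⟩
  have hcl : Function.Surjective cl := by
    rintro ⟨p, hp⟩
    obtain ⟨k, _, hk⟩ := Finset.mem_image.mp hp
    exact ⟨k, Subtype.ext hk⟩
  haveI : Nonempty ι := ⟨(hg.surj i0).choose⟩
  choose z π hz using fun α : P => indicator_affine h1 h2 α.1
  have hclα : ∀ (α : P) k, (cl k = α) = (h k = α.1) := by
    intro α k
    exact propext Subtype.ext_iff
  have hκ : ∀ α k, (if cl k = α then (1:ℂ) else 0) = z α (blk k) + ∑ j, ((ex k j:ℤ):ℂ) * π α j := by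
    intro α k
    rw [← hz α k]
    simp only [hclα]
  by_cases hsp : ∀ u : Fin n → ℂ, (∀ α, ∑ j, u j * π α j = 0) → u = 0
  · exact absurd (hg.essLin cl hcl z π hκ hsp) hlin
  push Not at hsp
  obtain ⟨u, hu, hu0⟩ := hsp
  let γ : Fin n → PR κ blk ex := fun i => ∑ α : P, α.1 * MvPolynomial.C (z α i)
  let v : Fin n → PR κ blk ex := fun j => ∑ α : P, α.1 * MvPolynomial.C (π α j)
  have hh : ∀ k, h k = γ (blk k) + ∑ j, ((ex k j : ℤ) : PR κ blk ex) * v j := by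
    intro k
    have e1 : h k = ∑ α : P, α.1 * MvPolynomial.C (if cl k = α then (1:ℂ) else 0) := by
      rw [Finset.sum_eq_single (cl k)]
      · simp [cl]
      · intro b _ hb; simp [hb.symm]
      · simp
    rw [e1]
    simp only [hκ, map_add, map_sum, map_mul, map_intCast, mul_add, Finset.sum_add_distrib, γ, v,
      Finset.mul_sum]
    congr 1
    rw [Finset.sum_comm]
    exact Finset.sum_congr rfl fun j _ => Finset.sum_congr rfl fun α _ => by ring
  have hgc := annT_gc (κ := κ) (blk := blk) (ex := ex)
  set M := (JM blk ex (gc κ blk ex)).updateRow i0 (fun j => MvPolynomial.C (u j)) with hM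
  have hdet : M.det ≠ 0 := hg.det_gc_ne_zero i0 u hu0
  have hv : v = 0 := by
    apply Matrix.eq_zero_of_mulVec_eq_zero hdet
    ext1 i
    simp only [Matrix.mulVec, dotProduct, Pi.zero_apply, hM, Matrix.updateRow_apply]
    by_cases hi : i = i0
    · simp only [hi, if_true, v, Finset.mul_sum]
      rw [Finset.sum_comm]
      refine Finset.sum_eq_zero fun α _ => ?_
      have := congrArg (MvPolynomial.C : ℂ → PR κ blk ex) (hu α)
      rw [map_zero, map_sum] at this
      rw [← mul_zero α.1, ← this, Finset.mul_sum]
      exact Finset.sum_congr rfl fun j _ => by rw [map_mul]; ring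
    · simp only [hi, if_false, JM, Matrix.of_apply, Finset.sum_mul]
      rw [Finset.sum_comm]
      have e1 := hgc.1 i
      have e2 := h2.1 i
      have e3 : BS blk (fun k => gc κ blk ex k * h k) i - γ i * BS blk (gc κ blk ex) i = 0 := by
        rw [e1, e2]; simp
      refine Eq.trans ?_ e3
      simp only [BS, Finset.mul_sum, ← Finset.sum_sub_distrib]
      refine Finset.sum_congr rfl fun k _ => ?_
      by_cases hk : blk k = i
      · simp only [hk, if_true, hh k, mul_add, Finset.mul_sum]
        rw [mul_comm (γ i), add_sub_cancel_left]
        exact Finset.sum_congr rfl fun j _ => by ring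
      · simp [hk]
  have hh' : ∀ k, h k = γ (blk k) := by
    intro k; rw [hh k, hv]; simp
  have hd : (fun i => γ i - γ i0) = 0 := by
    apply Matrix.eq_zero_of_vecMul_eq_zero hdet
    ext1 j
    simp only [Matrix.vecMul, dotProduct, Pi.zero_apply, hM, Matrix.updateRow_apply]
    have e0 : ∀ i, (γ i - γ i0) * (if i = i0 then MvPolynomial.C (u j) else JM blk ex (gc κ blk ex) i j)
        = (γ i - γ i0) * BS blk (fun k => gc κ blk ex k * ((ex k j : ℤ) : PR κ blk ex)) i := by
      intro i
      by_cases hi : i = i0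
      · simp [hi]
      · simp [hi, JM, BS]
    simp only [e0]
    rw [← sum_BS (blk := blk) (fun k => gc κ blk ex k * ((ex k j : ℤ) : PR κ blk ex)) (fun i => γ i - γ i0)]
    have e1 := h2.2 j
    have e2 := hgc.2 j
    have e3 : ∑ k, gc κ blk ex k * h k * ((ex k j : ℤ) : PR κ blk ex) -
      γ i0 * ∑ k, gc κ blk ex k * ((ex k j : ℤ) : PR κ blk ex) = 0 := by
      rw [e1, e2]; simp
    rw [← e3, Finset.mul_sum, ← Finset.sum_sub_distrib]
    exact Finset.sum_congr rfl fun k _ => by rw [hh' k]; ring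
  intro k k'
  rw [hh', hh']
  have a := congrFun hd (blk k)
  have b := congrFun hd (blk k')
  simp only [Pi.zero_apply] at a b
  linear_combination a - b
end

/-- The index type of the torus parameters. -/
abbrev KT {n : ℕ} (i0 : Fin n) : Type := {i : Fin n // i ≠ i0} ⊕ Fin n

section
variable {n : ℕ} {ι : Type} [Fintype ι] [DecidableEq ι]

/-- The scaling parameters. -/
noncomputable def tau (blk : ι → Fin n) (ex : ι → Fin n → ℤ) (i0 : Fin n) (i : Fin n) :
    PR (KT i0) blk ex :=
  if h : i = i0 then 1 else MvPolynomial.X (Sum.inl (Sum.inl ⟨i, h⟩))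

/-- The (inverse) coordinates of the root. -/
noncomputable def yv (blk : ι → Fin n) (ex : ι → Fin n → ℤ) (i0 : Fin n) (j : Fin n) :
    PR (KT i0) blk ex := MvPolynomial.X (Sum.inl (Sum.inr j))

/-- The monomial coefficient. -/
noncomputable def chi (blk : ι → Fin n) (ex : ι → Fin n → ℤ) (i0 : Fin n) (sh : ℤ) (k : ι) :
    PR (KT i0) blk ex :=
  tau blk ex i0 (blk k) * ∏ j, yv blk ex i0 j ^ (ex k j + sh).toNat

/-- The parametrization of the discriminant. -/
noncomputable def psi (blk : ι → Fin n) (ex : ι → Fin n → ℤ) (i0 : Fin n) (sh : ℤ) :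
    MvPolynomial ι ℂ →ₐ[ℂ] PR (KT i0) blk ex :=
  MvPolynomial.aeval fun k => chi blk ex i0 sh k * gc (KT i0) blk ex k

theorem chain_rule {R : Type} [CommRing R] [Algebra ℂ R] (D : Derivation ℂ R R) (F : ι → R)
    (G : MvPolynomial ι ℂ) :
    D (MvPolynomial.aeval F G) = ∑ k, MvPolynomial.aeval F (MvPolynomial.pderiv k G) * D (F k) := by
  induction G using MvPolynomial.induction_on with
  | C a => simp
  | add p q hp hq => simp [hp, hq, add_mul, Finset.sum_add_distrib]
  | mul_X p i hp =>
    simp only [map_mul, Derivation.leibniz, MvPolynomial.aeval_X, hp, smul_eq_mul, map_add,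
      MvPolynomial.pderiv_X, add_mul, Finset.sum_add_distrib, Finset.mul_sum]
    congr 1
    · rw [Finset.sum_eq_single i]
      · simp
      · intro b _ hb; simp [Pi.single_apply, Ne.symm hb]
      · simp
    · exact Finset.sum_congr rfl fun k _ => by ring

variable {blk : ι → Fin n} {ex : ι → Fin n → ℤ} {i0 : Fin n} {sh : ℤ}

theorem tau_ne_zero (i : Fin n) : tau blk ex i0 i ≠ 0 := by
  unfold tau
  split_ifs
  · exact one_ne_zero
  · exact MvPolynomial.X_ne_zero _

theorem yv_ne_zero (j : Fin n) : yv blk ex i0 j ≠ 0 := MvPolynomial.X_ne_zero _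

theorem chi_ne_zero (k : ι) : chi blk ex i0 sh k ≠ 0 :=
  mul_ne_zero (tau_ne_zero _) (Finset.prod_ne_zero_iff.mpr fun j _ => pow_ne_zero _ (yv_ne_zero j))

theorem pderiv_inr_tau (l) (i : Fin n) : MvPolynomial.pderiv (Sum.inr l) (tau blk ex i0 i) = 0 := by
  unfold tau
  split_ifs
  · simp
  · simp [MvPolynomial.pderiv_X]

theorem deriv_prod_pow {R : Type} [CommRing R] [Algebra ℂ R] (D : Derivation ℂ R R) (j : Fin n)
    (f : Fin n → R) (e : Fin n → ℕ) (h : ∀ j', j' ≠ j → D (f j') = 0) (h1 : D (f j) = 1) :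
    f j * D (∏ j', f j' ^ e j') = (e j : R) * ∏ j', f j' ^ e j' := by
  classical
  rw [← Finset.mul_prod_erase Finset.univ _ (Finset.mem_univ j)]
  have h0 : ∀ s : Finset (Fin n), j ∉ s → D (∏ j' ∈ s, f j' ^ e j') = 0 := by
    intro s
    induction s using Finset.induction_on with
    | empty => intro; simp
    | insert a s ha ih =>
      intro hj
      rw [Finset.mem_insert, not_or] at hj
      rw [Finset.prod_insert ha, Derivation.leibniz, ih hj.2, Derivation.leibniz_pow, h a (Ne.symm hj.1)]
      simp
  rw [Derivation.leibniz, h0 _ (Finset.notMem_erase j _), Derivation.leibniz_pow, h1]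
  simp only [smul_eq_mul, mul_zero, zero_add, nsmul_eq_mul, mul_one]
  rcases Nat.eq_zero_or_pos (e j) with h | h
  · simp [h]
  · obtain ⟨m, hm⟩ : ∃ m, e j = m + 1 := ⟨e j - 1, by omega⟩
    rw [hm]
    simp only [Nat.add_sub_cancel]
    ring

theorem deriv_prod_pow_zero {R : Type} [CommRing R] [Algebra ℂ R] (D : Derivation ℂ R R)
    (f : Fin n → R) (e : Fin n → ℕ) (h : ∀ j', D (f j') = 0) :
    D (∏ j', f j' ^ e j') = 0 := by
  have h0 : ∀ s : Finset (Fin n), D (∏ j' ∈ s, f j' ^ e j') = 0 := by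
    intro s
    induction s using Finset.induction_on with
    | empty => simp
    | insert a s ha ih =>
      rw [Finset.prod_insert ha, Derivation.leibniz, ih, Derivation.leibniz_pow, h a]
      simp
  exact h0 _

theorem pderiv_inr_chi (l) (k : ι) : MvPolynomial.pderiv (Sum.inr l) (chi blk ex i0 sh k) = 0 := by
  unfold chi
  rw [Derivation.leibniz, pderiv_inr_tau, deriv_prod_pow_zero]
  · simp
  · intro j; simp [yv, MvPolynomial.pderiv_X]

theorem pderiv_inl_gc {κ : Type} (t : κ) (k : ι) :
    MvPolynomial.pderiv (Sum.inl t) (gc κ blk ex k) = 0 := by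
  classical
  simp [gc, Derivation.leibniz, MvPolynomial.pderiv_X]

theorem euler_tau (i : Fin n) (hi : i ≠ i0) (k : ι) :
    tau blk ex i0 i * MvPolynomial.pderiv (Sum.inl (Sum.inl ⟨i, hi⟩))
      (chi blk ex i0 sh k * gc (KT i0) blk ex k) =
    if blk k = i then chi blk ex i0 sh k * gc (KT i0) blk ex k else 0 := by
  have hD : MvPolynomial.pderiv (Sum.inl (Sum.inl ⟨i, hi⟩)) (tau blk ex i0 (blk k)) =
      if blk k = i then 1 else 0 := by
    unfold tau
    by_cases h : blk k = i0
    · rw [dif_pos h, if_neg (fun h' => hi (h'.symm.trans h))]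
      simp
    · rw [dif_neg h, MvPolynomial.pderiv_X]
      by_cases h2 : blk k = i
      · subst h2; simp
      · rw [if_neg h2, Pi.single_apply, if_neg]
        intro h3
        simp only [Sum.inl.injEq, Subtype.mk.injEq] at h3
        exact h2 (by first | exact h3 | exact h3.symm)
  rw [Derivation.leibniz, pderiv_inl_gc]
  unfold chi
  rw [Derivation.leibniz, hD, deriv_prod_pow_zero]
  · by_cases h2 : blk k = i
    · simp only [h2, if_true, smul_eq_mul]; ring
    · simp [h2]
  · intro j; simp [yv, MvPolynomial.pderiv_X]

theorem euler_yv (j : Fin n) (k : ι) :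
    yv blk ex i0 j * MvPolynomial.pderiv (Sum.inl (Sum.inr j))
      (chi blk ex i0 sh k * gc (KT i0) blk ex k) =
    ((ex k j + sh).toNat : PR (KT i0) blk ex) * (chi blk ex i0 sh k * gc (KT i0) blk ex k) := by
  have hD : MvPolynomial.pderiv (Sum.inl (Sum.inr j)) (tau blk ex i0 (blk k)) = 0 := by
    unfold tau
    split_ifs
    · simp
    · simp [MvPolynomial.pderiv_X]
  have h1 := deriv_prod_pow (MvPolynomial.pderiv (Sum.inl (Sum.inr j))) j (yv blk ex i0)
    (fun j' => (ex k j' + sh).toNat) (by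
      intro j' hj'; simp [yv, MvPolynomial.pderiv_X, Pi.single_apply, hj']) (by simp [yv])
  rw [Derivation.leibniz, pderiv_inl_gc]
  unfold chi
  rw [Derivation.leibniz, hD]
  simp only [smul_eq_mul, mul_zero, zero_add, add_zero]
  linear_combination (tau blk ex i0 (blk k) * gc (KT i0) blk ex k) * h1

/-- The (scaled) gradient of an element of the kernel. -/
noncomputable def kap (blk : ι → Fin n) (ex : ι → Fin n → ℤ) (i0 : Fin n) (sh : ℤ)
    (G : MvPolynomial ι ℂ) (k : ι) : PR (KT i0) blk ex :=
  psi blk ex i0 sh (MvPolynomial.pderiv k G) * chi blk ex i0 sh k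

theorem kap_perp {G : MvPolynomial ι ℂ} (hG : psi blk ex i0 sh G = 0) :
    Perp (kap blk ex i0 sh G) := by
  intro l
  have := congrArg (MvPolynomial.pderiv (Sum.inr l)) hG
  rw [psi, chain_rule, map_zero] at this
  rw [← this]
  refine Finset.sum_congr rfl fun k _ => ?_
  rw [Derivation.leibniz, pderiv_inr_chi, pderiv_gc]
  simp only [kap, psi, smul_eq_mul, mul_zero, add_zero]
  ring

theorem kap_annT (hsh : ∀ k j, 0 ≤ ex k j + sh) {G : MvPolynomial ι ℂ}
    (hG : psi blk ex i0 sh G = 0) :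
    AnnT blk ex (fun k => gc (KT i0) blk ex k * kap blk ex i0 sh G k) := by
  have hsum := (kap_perp hG).pair (annT_gc (κ := KT i0))
  have h1 : ∀ i, i ≠ i0 → BS blk (fun k => gc (KT i0) blk ex k * kap blk ex i0 sh G k) i = 0 := by
    intro i hi
    have := congrArg (fun z => tau blk ex i0 i * MvPolynomial.pderiv (Sum.inl (Sum.inl ⟨i, hi⟩)) z) hG
    rw [psi, chain_rule, map_zero, mul_zero, Finset.mul_sum] at this
    refine Eq.trans ?_ this
    refine Finset.sum_congr rfl fun k _ => ?_
    have h2 := euler_tau (blk := blk) (ex := ex) (i0 := i0) (sh := sh) i hi k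
    rw [mul_left_comm, h2]
    by_cases hk : blk k = i
    · simp only [hk, if_true, kap, psi]; ring
    · simp [hk]
  refine ⟨fun i => ?_, fun j => ?_⟩
  · by_cases hi : i = i0
    · subst hi
      have h3 := sum_BS (blk := blk) (fun k => gc (KT i) blk ex k * kap blk ex i sh G k) (fun _ => 1)
      simp only [mul_one, one_mul, hsum] at h3
      rw [Finset.sum_eq_single i] at h3
      · exact h3.symm
      · intro b _ hb; exact h1 b hb
      · simp
    · exact h1 i hi
  · have := congrArg (fun z => yv blk ex i0 j * MvPolynomial.pderiv (Sum.inl (Sum.inr j)) z) hG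
    rw [psi, chain_rule, map_zero, mul_zero, Finset.mul_sum] at this
    have h3 : ∑ k, gc (KT i0) blk ex k * kap blk ex i0 sh G k * ((ex k j : ℤ) : PR (KT i0) blk ex)
        + (sh : PR (KT i0) blk ex) * ∑ k, gc (KT i0) blk ex k * kap blk ex i0 sh G k = 0 := by
      refine Eq.trans ?_ this
      rw [Finset.mul_sum, ← Finset.sum_add_distrib]
      refine Finset.sum_congr rfl fun k _ => ?_
      rw [mul_left_comm (yv blk ex i0 j), euler_yv]
      have h4 : (((ex k j + sh).toNat : ℕ) : PR (KT i0) blk ex) = (ex k j : PR (KT i0) blk ex) + sh := by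
        have : (((ex k j + sh).toNat : ℤ)) = ex k j + sh := Int.toNat_of_nonneg (hsh k j)
        rw [← Int.cast_natCast, this]; push_cast; rfl
      rw [h4]
      simp only [kap, psi]; ring
    rw [hsum, mul_zero, add_zero] at h3
    exact h3

end

section
variable {n : ℕ} {ι : Type} [Fintype ι] [DecidableEq ι]

theorem mono_ne_zero (a : Fin n → ℤ) (x : Torus n) : mono a x ≠ 0 :=
  Finset.prod_ne_zero_iff.mpr fun j _ => zpow_ne_zero _ (x j).ne_zero

theorem mono_add (a b : Fin n → ℤ) (x : Torus n) : mono (a + b) x = mono a x * mono b x := by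
  simp only [mono, ← Finset.prod_mul_distrib]
  exact Finset.prod_congr rfl fun j _ => zpow_add₀ (x j).ne_zero _ _

/-- Systems with a singular root. -/
def DS (blk : ι → Fin n) (ex : ι → Fin n → ℤ) : Set (ι → ℂ) :=
  {f | ∃ (x : Torus n) (l : Fin n → ℂ), Sing blk ex (fun k => f k * mono (ex k) x) l}

variable {blk : ι → Fin n} {ex : ι → Fin n → ℤ} {i0 : Fin n} {sh : ℤ}

theorem eval_psi (p : KT i0 ⊕ Fin (Module.finrank ℂ (Uperp blk ex)) → ℂ) (f : ι → ℂ)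
    (hf : ∀ k, MvPolynomial.eval p (chi blk ex i0 sh k * gc (KT i0) blk ex k) = f k)
    (G : MvPolynomial ι ℂ) :
    MvPolynomial.eval p (psi blk ex i0 sh G) = MvPolynomial.eval f G := by
  induction G using MvPolynomial.induction_on with
  | C a => simp [psi]
  | add a b ha hb => simp [ha, hb]
  | mul_X a k ha =>
    rw [map_mul, map_mul, ha, map_mul, MvPolynomial.eval_X, ← hf k]
    simp [psi]

theorem exists_point (hsh : ∀ k j, 0 ≤ ex k j + sh) (f : ι → ℂ) (x : Torus n) (l : Fin n → ℂ)
    (hS : Sing blk ex (fun k => f k * mono (ex k) x) l) (hl : ∀ i, l i ≠ 0) :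
    ∃ p : KT i0 ⊕ Fin (Module.finrank ℂ (Uperp blk ex)) → ℂ,
      (∀ k, MvPolynomial.eval p (chi blk ex i0 sh k * gc (KT i0) blk ex k) = f k) ∧
      ∃ r : ℂ, r ≠ 0 ∧ ∀ k, MvPolynomial.eval p (chi blk ex i0 sh k) * (l (blk k) * mono (ex k) x) = r := by
  let r : ℂ := l i0 * (mono (fun _ => sh) x)⁻¹
  have hr : r ≠ 0 := mul_ne_zero (hl i0) (inv_ne_zero (mono_ne_zero _ _))
  let g : ι → ℂ := fun k => r⁻¹ * (l (blk k) * (f k * mono (ex k) x))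
  have hgU : g ∈ Uperp blk ex := by
    refine ⟨fun i => ?_, fun j => ?_⟩
    · have := hS.sum i
      simp only [BS, ← Finset.sum_filter] at this ⊢
      rw [← mul_zero (r⁻¹ * l i), ← this, Finset.mul_sum]
      refine Finset.sum_congr rfl fun k hk => ?_
      rw [Finset.mem_filter] at hk
      simp only [g, hk.2]; ring
    · rw [← mul_zero r⁻¹, ← hS.ker j, Finset.mul_sum]
      exact Finset.sum_congr rfl fun k _ => by simp only [g]; ring
  obtain ⟨s, hs⟩ := exists_cb g hgU
  let p : KT i0 ⊕ Fin (Module.finrank ℂ (Uperp blk ex)) → ℂ :=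
    Sum.elim (Sum.elim (fun i => l i0 / l i.1) (fun j => ((x j : ℂ))⁻¹)) s
  have htau : ∀ i, MvPolynomial.eval p (tau blk ex i0 i) = l i0 / l i := by
    intro i
    unfold tau
    by_cases h : i = i0
    · simp [h, hl i0]
    · simp [h, p]
  have hchi : ∀ k, MvPolynomial.eval p (chi blk ex i0 sh k) * (l (blk k) * mono (ex k) x) = r := by
    intro k
    have h1 : MvPolynomial.eval p (∏ j, yv blk ex i0 j ^ (ex k j + sh).toNat) =
        (mono (ex k + fun _ => sh) x)⁻¹ := by
      rw [map_prod, mono, ← Finset.prod_inv_distrib]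
      refine Finset.prod_congr rfl fun j _ => ?_
      simp only [map_pow, yv, MvPolynomial.eval_X, p, Sum.elim_inl, Sum.elim_inr, Pi.add_apply]
      have : (((ex k j + sh).toNat : ℤ)) = ex k j + sh := Int.toNat_of_nonneg (hsh k j)
      rw [inv_pow, ← zpow_natCast, this]
    unfold chi
    rw [map_mul, htau, h1, mono_add]
    simp only [r]
    have := mono_ne_zero (ex k) x
    have := hl (blk k)
    have := mono_ne_zero (fun _ => sh) x
    field_simp
  refine ⟨p, fun k => ?_, r, hr, hchi⟩
  rw [map_mul, eval_gc]
  simp only [p, Sum.elim_inr]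
  rw [← hs k]
  simp only [g]
  have h2 := hchi k
  calc _ = (MvPolynomial.eval p (chi blk ex i0 sh k) * (l (blk k) * mono (ex k) x)) * r⁻¹ * f k := by ring
    _ = f k := by rw [h2, mul_inv_cancel₀ hr, one_mul]

theorem mem_DS_of_point (hsh : ∀ k j, 0 ≤ ex k j + sh)
    (p : KT i0 ⊕ Fin (Module.finrank ℂ (Uperp blk ex)) → ℂ) (hp : ∀ t, p (Sum.inl t) ≠ 0) :
    (fun k => MvPolynomial.eval p (chi blk ex i0 sh k * gc (KT i0) blk ex k)) ∈ DS blk ex := by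
  let x : Torus n := fun j => (Units.mk0 (p (Sum.inl (Sum.inr j))) (hp _))⁻¹
  let t : Fin n → ℂ := fun i => MvPolynomial.eval p (tau blk ex i0 i)
  have ht : ∀ i, t i ≠ 0 := by
    intro i
    simp only [t, tau]
    split_ifs
    · simp
    · simpa using hp _
  let g : ι → ℂ := fun k => MvPolynomial.eval p (gc (KT i0) blk ex k)
  have hgA : AnnT blk ex g := by
    have := annT_gc (κ := KT i0) (blk := blk) (ex := ex)
    refine ⟨fun i => ?_, fun j => ?_⟩
    · have h := congrArg (MvPolynomial.eval p) (this.1 i)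
      simpa [BS, apply_ite (MvPolynomial.eval p)] using h
    · have h := congrArg (MvPolynomial.eval p) (this.2 j)
      simpa using h
  let m : ℂ := (mono (fun _ => sh) x)⁻¹
  have hc : ∀ k, MvPolynomial.eval p (chi blk ex i0 sh k * gc (KT i0) blk ex k) * mono (ex k) x =
      t (blk k) * m * g k := by
    intro k
    have h1 : MvPolynomial.eval p (∏ j, yv blk ex i0 j ^ (ex k j + sh).toNat) =
        (mono (ex k + fun _ => sh) x)⁻¹ := by
      rw [map_prod, mono, ← Finset.prod_inv_distrib]
      refine Finset.prod_congr rfl fun j _ => ?_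
      simp only [map_pow, yv, MvPolynomial.eval_X, Pi.add_apply]
      have : (((ex k j + sh).toNat : ℤ)) = ex k j + sh := Int.toNat_of_nonneg (hsh k j)
      rw [← zpow_natCast, this]
      simp only [x, Units.val_inv_eq_inv_val, Units.val_mk0, inv_zpow, inv_inv]
    unfold chi
    rw [map_mul, map_mul, h1, mono_add]
    simp only [t, m, g]
    have := mono_ne_zero (ex k) x
    have := mono_ne_zero (fun _ => sh) x
    field_simp
  refine ⟨x, fun i => (t i)⁻¹, ⟨fun i => ?_, ?_, fun j => ?_⟩⟩
  · simp only [hc]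
    have := hgA.1 i
    simp only [BS, ← Finset.sum_filter] at this ⊢
    rw [← mul_zero (t i * m), ← this, Finset.mul_sum]
    refine Finset.sum_congr rfl fun k hk => ?_
    rw [Finset.mem_filter] at hk
    rw [hk.2]
  · intro h
    exact inv_ne_zero (ht i0) (congrFun h i0)
  · simp only [hc]
    rw [← mul_zero m, ← hgA.2 j, Finset.mul_sum]
    refine Finset.sum_congr rfl fun k hk => ?_
    have := ht (blk k)
    field_simp

/-- Extension of polynomial identities from full-support singular systems. -/
theorem Good.extend (hg : Good blk ex) (x : Torus n) (H : ((ι → ℂ) × (Fin n → ℂ)) → ℂ)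
    (hH : LP H)
    (h0 : ∀ (f : ι → ℂ) l, Sing blk ex (fun k => f k * mono (ex k) x) l → (∀ i, l i ≠ 0) → H (f, l) = 0)
    (f : ι → ℂ) (l) (hS : Sing blk ex (fun k => f k * mono (ex k) x) l) : H (f, l) = 0 := by
  by_contra hne
  let G : ((ι → ℂ) × (Fin n → ℂ)) → ℂ := fun w => H (fun k => w.1 k * (mono (ex k) x)⁻¹, w.2)
  have hG : LP G := by
    intro w d
    obtain ⟨p, hp⟩ := hH (fun k => w.1 k * (mono (ex k) x)⁻¹, w.2) (fun k => d.1 k * (mono (ex k) x)⁻¹, d.2)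
    refine ⟨p, fun ε => ?_⟩
    rw [← hp ε]
    simp only [G]
    congr 1
    ext k
    · simp; ring
    · simp
  have e : ∀ (c : ι → ℂ) k, c k * (mono (ex k) x)⁻¹ * mono (ex k) x = c k := by
    intro c k
    have := mono_ne_zero (ex k) x
    field_simp
  have h1 : G (fun k => f k * mono (ex k) x, l) ≠ 0 := by
    have : (fun k => f k * mono (ex k) x * (mono (ex k) x)⁻¹) = f := by
      ext k
      have := mono_ne_zero (ex k) x
      field_simp
    simp only [G, this]
    exact hne
  obtain ⟨c', l', hS', hl', hG'⟩ := hg.sup G hG _ _ _ hS h1 rfl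
  apply hG'
  apply h0 _ _ _ hl'
  simp only [e]
  exact hS'

theorem LP.evalFst (G : MvPolynomial ι ℂ) :
    LP (fun w : (ι → ℂ) × (Fin n → ℂ) => MvPolynomial.eval w.1 G) := by
  have := LP.aeval (W := (ι → ℂ) × (Fin n → ℂ)) (fun k w => w.1 k)
    (fun k => LP.lin ((LinearMap.proj k).comp (LinearMap.fst ℂ (ι → ℂ) (Fin n → ℂ)))) G
  simpa [MvPolynomial.aeval_eq_eval] using this

theorem LP.snd (i : Fin n) :
    LP (fun w : (ι → ℂ) × (Fin n → ℂ) => w.2 i) :=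
  LP.lin ((LinearMap.proj i).comp (LinearMap.snd ℂ (ι → ℂ) (Fin n → ℂ)))

theorem Good.psi_eq_zero_iff (hg : Good blk ex) (hsh : ∀ k j, 0 ≤ ex k j + sh) (G : MvPolynomial ι ℂ) :
    psi blk ex i0 sh G = 0 ↔ ∀ f ∈ DS blk ex, MvPolynomial.eval f G = 0 := by
  constructor
  · rintro h f ⟨x, l, hS⟩
    refine hg.extend x (fun w => MvPolynomial.eval w.1 G) (LP.evalFst G) ?_ f l hS
    intro f l hS hl
    obtain ⟨p, hp, -⟩ := exists_point (i0 := i0) hsh f x l hS hl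
    simp only
    rw [← eval_psi p f hp, h, map_zero]
  · intro h
    have h1 : psi blk ex i0 sh G * ∏ t : KT i0, MvPolynomial.X (Sum.inl t) = 0 := by
      apply MvPolynomial.funext
      intro p
      rw [map_mul, map_zero]
      by_cases hp : ∀ t, p (Sum.inl t) ≠ 0
      · rw [eval_psi p _ (fun k => rfl), h _ (mem_DS_of_point hsh p hp), zero_mul]
      · push Not at hp
        obtain ⟨t, ht⟩ := hp
        rw [map_prod, Finset.prod_eq_zero (Finset.mem_univ t), mul_zero]
        simpa using ht
    rcases mul_eq_zero.mp h1 with h2 | h2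
    · exact h2
    · exfalso
      exact Finset.prod_ne_zero_iff.mpr (fun t _ => MvPolynomial.X_ne_zero _) h2

/-- The hypothesis of non-linearity. -/
def NonLin (blk : ι → Fin n) (ex : ι → Fin n → ℤ) : Prop :=
  ¬ ∃ (φ : (Fin n → ℤ) ≃+ (Fin n → ℤ)) (v : Fin n → (Fin n → ℤ)),
      ∀ k, φ (ex k) + v (blk k) ∈ stdSimplexVertices n

theorem Good.kap_const (hg : Good blk ex) (hlin : NonLin blk ex) (hsh : ∀ k j, 0 ≤ ex k j + sh)
    {G : MvPolynomial ι ℂ} (hG : psi blk ex i0 sh G = 0) (k k' : ι) :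
    kap blk ex i0 sh G k = kap blk ex i0 sh G k' :=
  hg.const_of_perp i0 hlin (kap_perp hG) (kap_annT hsh hG) k k'

/-- The gradient of an equation at a singular system. -/
theorem Good.grad (hg : Good blk ex) (hlin : NonLin blk ex) (hsh : ∀ k j, 0 ≤ ex k j + sh)
    {G : MvPolynomial ι ℂ} (hG : psi blk ex i0 sh G = 0) (x : Torus n) (f : ι → ℂ) (l)
    (hS : Sing blk ex (fun k => f k * mono (ex k) x) l) (k k' : ι) :
    MvPolynomial.eval f (MvPolynomial.pderiv k G) * (l (blk k') * mono (ex k') x) =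
    MvPolynomial.eval f (MvPolynomial.pderiv k' G) * (l (blk k) * mono (ex k) x) := by
  rw [← sub_eq_zero]
  refine hg.extend x (fun w =>
    MvPolynomial.eval w.1 (MvPolynomial.pderiv k G) * (w.2 (blk k') * mono (ex k') x) -
    MvPolynomial.eval w.1 (MvPolynomial.pderiv k' G) * (w.2 (blk k) * mono (ex k) x)) ?_ ?_ f l hS
  · exact ((LP.evalFst _).mul ((LP.snd _).mul (LP.const _))).sub
      ((LP.evalFst _).mul ((LP.snd _).mul (LP.const _)))
  · intro f l hS hl
    obtain ⟨p, hp, r, hr, hchi⟩ := exists_point (i0 := i0) hsh f x l hS hl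
    have h1 := congrArg (MvPolynomial.eval p) (hg.kap_const hlin hsh hG k k')
    simp only [kap, map_mul, eval_psi p f hp] at h1
    have e1 := hchi k
    have e2 := hchi k'
    set a := MvPolynomial.eval p (chi blk ex i0 sh k)
    set b := MvPolynomial.eval p (chi blk ex i0 sh k')
    have ha : a ≠ 0 := by rintro h; rw [h, zero_mul] at e1; exact hr e1.symm
    have hb : b ≠ 0 := by rintro h; rw [h, zero_mul] at e2; exact hr e2.symm
    simp only
    apply mul_left_cancel₀ (mul_ne_zero ha hb)
    linear_combination (a * MvPolynomial.eval f (MvPolynomial.pderiv k G)) * e2 -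
      (b * MvPolynomial.eval f (MvPolynomial.pderiv k' G)) * e1 + r * h1

end

section
variable {n : ℕ} {ι : Type} [Fintype ι] [DecidableEq ι]
variable {blk : ι → Fin n} {ex : ι → Fin n → ℤ} {i0 : Fin n} {sh : ℤ}

theorem pderiv_swap (i j : ι) (G : MvPolynomial ι ℂ) :
    MvPolynomial.pderiv i (MvPolynomial.pderiv j G) = MvPolynomial.pderiv j (MvPolynomial.pderiv i G) := by
  induction G using MvPolynomial.induction_on with
  | C a => simp
  | add p q hp hq => simp [hp, hq]
  | mul_X p k hp =>
    have h0 : ∀ a b : ι, MvPolynomial.pderiv a (Pi.single (M := fun _ => MvPolynomial ι ℂ) b 1 k) = 0 := by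
      intro a b
      by_cases h : k = b
      · subst h; simp
      · simp [Pi.single_apply, h]
    simp only [Derivation.leibniz, MvPolynomial.pderiv_X, map_add, smul_eq_mul, hp, h0]
    ring

theorem Good.exists_ker (hg : Good blk ex) (i0 : Fin n) (sh : ℤ) :
    ∃ G, G ≠ 0 ∧ psi blk ex i0 sh G = 0 := by
  by_contra hc
  push Not at hc
  have hinj : Function.Injective (psi blk ex i0 sh) := by
    rw [injective_iff_map_eq_zero]
    intro G hG
    by_contra hne
    exact hc G hne hG
  have h1 := card_le_ringKrullDim _ (show AlgebraicIndependent ℂ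
    (fun k => chi blk ex i0 sh k * gc (KT i0) blk ex k) from hinj)
  rw [MvPolynomial.ringKrullDim_of_isNoetherianRing] at h1
  have h2 := hg.finrank_Uperp
  have hn : 0 < n := i0.pos
  simp only [Nat.card_eq_fintype_card, Fintype.card_sum, Fintype.card_fin,
    Fintype.card_subtype_compl, Fintype.card_subtype_eq, ringKrullDim_eq_zero_of_field, zero_add] at h1
  have h3 : Fintype.card ι ≤ (n - 1 + n) + Module.finrank ℂ (Uperp blk ex) := by exact_mod_cast h1
  omega

theorem Good.pderiv_mem_of_one (hg : Good blk ex) (hlin : NonLin blk ex) (hsh : ∀ k j, 0 ≤ ex k j + sh)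
    {G : MvPolynomial ι ℂ} (hG : psi blk ex i0 sh G = 0) (k0 : ι)
    (h0 : psi blk ex i0 sh (MvPolynomial.pderiv k0 G) = 0) (k : ι) :
    psi blk ex i0 sh (MvPolynomial.pderiv k G) = 0 := by
  have := hg.kap_const hlin hsh hG k k0
  simp only [kap, h0, zero_mul] at this
  rcases mul_eq_zero.mp this with h | h
  · exact h
  · exact absurd h (chi_ne_zero k)

/-- The equation of the discriminant. -/
theorem Good.exists_delta (hg : Good blk ex) (hlin : NonLin blk ex) (hsh : ∀ k j, 0 ≤ ex k j + sh) :
    ∃ G, G ≠ 0 ∧ psi blk ex i0 sh G = 0 ∧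
      ∀ k, psi blk ex i0 sh (MvPolynomial.pderiv k G) ≠ 0 := by
  classical
  have hex : ∃ N, ∃ G : MvPolynomial ι ℂ, G ≠ 0 ∧ psi blk ex i0 sh G = 0 ∧ G.totalDegree = N := by
    obtain ⟨G, h1, h2⟩ := hg.exists_ker i0 sh
    exact ⟨_, G, h1, h2, rfl⟩
  obtain ⟨G, h1, h2, h3⟩ := Nat.find_spec hex
  refine ⟨G, h1, h2, fun k0 h0 => ?_⟩
  have hz : ∀ k, MvPolynomial.pderiv k G = 0 := by
    intro k
    by_contra hne
    have := hg.pderiv_mem_of_one hlin hsh h2 k0 h0 k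
    have hlt := totalDegree_pderiv_lt G k hne
    rw [h3] at hlt
    exact Nat.find_min hex hlt ⟨_, hne, this, rfl⟩
  obtain ⟨c, hc⟩ := eq_C_of_pderiv_eq_zero G hz
  rw [hc] at h1 h2
  have : c = 0 := by simpa [psi] using h2
  simp [this] at h1

/-- Elements of the kernel not depending on one variable are zero. -/
theorem Good.eq_zero_of_pderiv (hg : Good blk ex) (hlin : NonLin blk ex) (hsh : ∀ k j, 0 ≤ ex k j + sh)
    (k0 : ι) : ∀ (N : ℕ) (G : MvPolynomial ι ℂ), G.totalDegree ≤ N → psi blk ex i0 sh G = 0 →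
      MvPolynomial.pderiv k0 G = 0 → G = 0 := by
  intro N
  induction N using Nat.strong_induction_on with
  | _ N ih =>
  intro G hN hG h0
  have hz : ∀ k, MvPolynomial.pderiv k G = 0 := by
    intro k
    by_contra hne
    have h1 := hg.pderiv_mem_of_one hlin hsh hG k0 (by rw [h0, map_zero]) k
    have hlt := totalDegree_pderiv_lt G k hne
    refine hne (ih _ (lt_of_lt_of_le hlt hN) _ le_rfl h1 ?_)
    have hcomm : MvPolynomial.pderiv k0 (MvPolynomial.pderiv k G) =
        MvPolynomial.pderiv k (MvPolynomial.pderiv k0 G) := by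
      exact pderiv_swap k0 k G
    rw [hcomm, h0, map_zero]
  obtain ⟨c, hc⟩ := eq_C_of_pderiv_eq_zero G hz
  rw [hc] at hG
  have : c = 0 := by simpa [psi] using hG
  rw [hc, this, map_zero]

theorem Good.krullDim (hg : Good blk ex) (hlin : NonLin blk ex) (hsh : ∀ k j, 0 ≤ ex k j + sh)
    (i0 : Fin n) :
    ringKrullDim (MvPolynomial ι ℂ ⧸ RingHom.ker (psi blk ex i0 sh)) =
      ((Fintype.card ι - 1 : ℕ) : WithBot ℕ∞) := by
  classical
  obtain ⟨k0, _⟩ := hg.surj i0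
  have hpos : 0 < Fintype.card ι := Fintype.card_pos_iff.mpr ⟨k0⟩
  apply le_antisymm
  · obtain ⟨G, h1, h2, -⟩ := hg.exists_delta (i0 := i0) hlin hsh
    have h3 := ringKrullDim_succ_le_of_surjective (Ideal.Quotient.mk (RingHom.ker (psi blk ex i0 sh)))
      Ideal.Quotient.mk_surjective (r := G) (mem_nonZeroDivisors_of_ne_zero h1)
      (Ideal.Quotient.eq_zero_iff_mem.mpr h2)
    rw [MvPolynomial.ringKrullDim_of_isNoetherianRing, ringKrullDim_eq_zero_of_field, zero_add,
      Nat.card_eq_fintype_card] at h3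
    obtain ⟨m, hm⟩ : ∃ m, Fintype.card ι = m + 1 := ⟨_, (Nat.succ_pred_eq_of_pos hpos).symm⟩
    rw [hm] at h3 ⊢
    simp only [Nat.add_sub_cancel]
    push_cast at h3
    revert h3
    generalize ringKrullDim (MvPolynomial ι ℂ ⧸ RingHom.ker (psi blk ex i0 sh)) = d
    intro h3
    induction d with
    | bot => exact bot_le
    | coe d =>
      induction d with
      | top =>
        have h4 : (⊤ : ℕ∞) + 1 ≤ ((m + 1 : ℕ) : ℕ∞) := by exact_mod_cast h3
        rw [top_add, top_le_iff] at h4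
        exact absurd h4 (ENat.coe_ne_top _)
      | coe d =>
        have : d + 1 ≤ m + 1 := by exact_mod_cast h3
        exact_mod_cast (Nat.le_of_succ_le_succ this)
  · haveI : (RingHom.ker (psi blk ex i0 sh)).IsPrime := RingHom.ker_isPrime _
    have h1 := card_le_ringKrullDim (κ := {k : ι // k ≠ k0})
      (fun k => Ideal.Quotient.mkₐ ℂ (RingHom.ker (psi blk ex i0 sh)) (MvPolynomial.X k.1)) (by
        rw [algebraicIndependent_iff]
        intro P hP
        have e1 : MvPolynomial.aeval (fun k : {k : ι // k ≠ k0} =>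
            Ideal.Quotient.mkₐ ℂ (RingHom.ker (psi blk ex i0 sh)) (MvPolynomial.X k.1)) P =
            Ideal.Quotient.mkₐ ℂ (RingHom.ker (psi blk ex i0 sh)) (MvPolynomial.rename Subtype.val P) := by
          have := MvPolynomial.aeval_rename (k := (Subtype.val : {k : ι // k ≠ k0} → ι))
            (g := fun k => Ideal.Quotient.mkₐ ℂ (RingHom.ker (psi blk ex i0 sh)) (MvPolynomial.X k)) (p := P)
          refine Eq.trans this.symm ?_
          have h5 := MvPolynomial.comp_aeval_apply (f := (MvPolynomial.X : ι → MvPolynomial ι ℂ))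
            (Ideal.Quotient.mkₐ ℂ (RingHom.ker (psi blk ex i0 sh))) (MvPolynomial.rename Subtype.val P)
          rw [MvPolynomial.aeval_X_left_apply] at h5
          exact h5.symm
        rw [e1] at hP
        have h2 : psi blk ex i0 sh (MvPolynomial.rename Subtype.val P) = 0 :=
          Ideal.Quotient.eq_zero_iff_mem.mp hP
        have h3 : MvPolynomial.pderiv k0 (MvPolynomial.rename Subtype.val P) = 0 := by
          apply MvPolynomial.pderiv_eq_zero_of_notMem_vars
          intro hmem
          have := MvPolynomial.vars_rename Subtype.val P hmem
          rw [Finset.mem_image] at this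
          obtain ⟨a, _, ha⟩ := this
          exact a.2 ha
        have h4 := hg.eq_zero_of_pderiv hlin hsh k0 _ _ le_rfl h2 h3
        exact (MvPolynomial.rename_injective _ Subtype.val_injective) (by rw [h4, map_zero]))
    simpa [Fintype.card_subtype_compl] using h1

end

section
variable {n : ℕ} {ι : Type} [Fintype ι] [DecidableEq ι]
variable {blk : ι → Fin n} {ex : ι → Fin n → ℤ} {i0 : Fin n} {sh : ℤ}

theorem chi_prod (hsh : ∀ k j, 0 ≤ ex k j + sh) (m m' : ι → ℕ)
    (h1 : ∀ i, BS blk (fun k => (m k : ℤ)) i = BS blk (fun k => (m' k : ℤ)) i)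
    (h2 : ∀ j, ∑ k, (m k : ℤ) * ex k j = ∑ k, (m' k : ℤ) * ex k j) :
    ∏ k, chi blk ex i0 sh k ^ m k = ∏ k, chi blk ex i0 sh k ^ m' k := by
  have hs : ∑ k, (m k : ℤ) = ∑ k, (m' k : ℤ) := by
    have a := sum_BS (blk := blk) (fun k => (m k : ℤ)) (fun _ => 1)
    have b := sum_BS (blk := blk) (fun k => (m' k : ℤ)) (fun _ => 1)
    simp only [mul_one] at a b
    rw [a, b]
    exact Finset.sum_congr rfl fun i _ => by rw [h1 i]
  have key : ∀ m : ι → ℕ, ∏ k, chi blk ex i0 sh k ^ m k =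
      (∏ i, tau blk ex i0 i ^ (BS blk (fun k => (m k : ℤ)) i).toNat) *
      ∏ j, yv blk ex i0 j ^ (∑ k, (m k : ℤ) * (ex k j + sh)).toNat := by
    intro m
    simp only [chi, mul_pow, Finset.prod_mul_distrib]
    congr 1
    · have : ∀ i, (BS blk (fun k => (m k : ℤ)) i).toNat = ∑ k, if blk k = i then m k else 0 := by
        intro i
        have : BS blk (fun k => (m k : ℤ)) i = ((∑ k, if blk k = i then m k else 0 : ℕ) : ℤ) := by
          simp [BS]
        rw [this, Int.toNat_natCast]
      simp only [this, ← Finset.prod_pow_eq_pow_sum]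
      rw [Finset.prod_comm]
      refine Finset.prod_congr rfl fun k _ => ?_
      rw [Finset.prod_eq_single (blk k)]
      · simp
      · intro b _ hb; simp [Ne.symm hb]
      · simp
    · have : ∀ j, (∑ k, (m k : ℤ) * (ex k j + sh)).toNat = ∑ k, (ex k j + sh).toNat * m k := by
        intro j
        have : ∑ k, (m k : ℤ) * (ex k j + sh) = ((∑ k, (ex k j + sh).toNat * m k : ℕ) : ℤ) := by
          push_cast
          refine Finset.sum_congr rfl fun k _ => ?_
          rw [Int.toNat_of_nonneg (hsh k j)]; ring
        rw [this, Int.toNat_natCast]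
      simp only [this, ← Finset.prod_pow_eq_pow_sum, pow_mul, ← Finset.prod_pow]
      rw [Finset.prod_comm]
  rw [key, key]
  congr 1
  · exact Finset.prod_congr rfl fun i _ => by rw [h1 i]
  · refine Finset.prod_congr rfl fun j _ => ?_
    simp only [mul_add, Finset.sum_add_distrib, h2 j, ← Finset.sum_mul, hs]

theorem Good.binomial (hg : Good blk ex) (hlin : NonLin blk ex) (hsh : ∀ k j, 0 ≤ ex k j + sh)
    {G : MvPolynomial ι ℂ} (hG : psi blk ex i0 sh G = 0) (m m' : ι → ℕ)
    (h1 : ∀ i, BS blk (fun k => (m k : ℤ)) i = BS blk (fun k => (m' k : ℤ)) i)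
    (h2 : ∀ j, ∑ k, (m k : ℤ) * ex k j = ∑ k, (m' k : ℤ) * ex k j) :
    psi blk ex i0 sh (∏ k, MvPolynomial.pderiv k G ^ m k - ∏ k, MvPolynomial.pderiv k G ^ m' k) = 0 := by
  obtain ⟨k0, _⟩ := hg.surj i0
  have hs : ∑ k, m k = ∑ k, m' k := by
    have a := sum_BS (blk := blk) (fun k => (m k : ℤ)) (fun _ => 1)
    have b := sum_BS (blk := blk) (fun k => (m' k : ℤ)) (fun _ => 1)
    simp only [mul_one] at a b
    have : ∑ k, (m k : ℤ) = ∑ k, (m' k : ℤ) := by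
      rw [a, b]
      exact Finset.sum_congr rfl fun i _ => by rw [h1 i]
    exact_mod_cast this
  have key : ∀ m : ι → ℕ, psi blk ex i0 sh (∏ k, MvPolynomial.pderiv k G ^ m k) *
      ∏ k, chi blk ex i0 sh k ^ m k = kap blk ex i0 sh G k0 ^ ∑ k, m k := by
    intro m
    rw [map_prod, ← Finset.prod_mul_distrib, ← Finset.prod_pow_eq_pow_sum]
    refine Finset.prod_congr rfl fun k _ => ?_
    rw [map_pow, ← mul_pow, hg.kap_const hlin hsh hG k0 k]
    rfl
  have hne : ∏ k, chi blk ex i0 sh k ^ m k ≠ 0 :=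
    Finset.prod_ne_zero_iff.mpr fun k _ => pow_ne_zero _ (chi_ne_zero k)
  apply mul_right_cancel₀ hne
  rw [map_sub, sub_mul, key m, chi_prod hsh m m' h1 h2, key m', hs, sub_self, zero_mul]

/-- Every element of the big lattice is an integral combination. -/
theorem Good.lattice (hg : Good blk ex) (u v : Fin n → ℤ) :
    ∃ m : ι → ℤ, (∀ i, BS blk m i = u i) ∧ ∀ j, ∑ k, m k * ex k j = v j := by
  let W : Submodule ℤ ((Fin n → ℤ) × (Fin n → ℤ)) :=
    { carrier := {w | ∃ m : ι → ℤ, (∀ i, BS blk m i = w.1 i) ∧ ∀ j, ∑ k, m k * ex k j = w.2 j}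
      add_mem' := by
        rintro a b ⟨m, h1, h2⟩ ⟨m', h1', h2'⟩
        refine ⟨m + m', fun i => ?_, fun j => ?_⟩
        · rw [Prod.fst_add, Pi.add_apply, ← h1, ← h1']
          simp [BS, ← Finset.sum_filter, Finset.sum_add_distrib]
        · rw [Prod.snd_add, Pi.add_apply, ← h2, ← h2']
          simp [add_mul, Finset.sum_add_distrib]
      zero_mem' := ⟨0, by simp [BS], by simp⟩
      smul_mem' := by
        rintro t a ⟨m, h1, h2⟩
        refine ⟨t • m, fun i => ?_, fun j => ?_⟩
        · rw [Prod.smul_fst, Pi.smul_apply, ← h1]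
          simp [BS, ← Finset.sum_filter, Finset.mul_sum]
        · rw [Prod.smul_snd, Pi.smul_apply, ← h2]
          simp [mul_assoc, Finset.mul_sum] }
  have hk : ∀ k, ((Pi.single (blk k) 1, ex k) : (Fin n → ℤ) × (Fin n → ℤ)) ∈ W := by
    intro k
    refine ⟨Pi.single k 1, fun i => ?_, fun j => ?_⟩
    · simp only [BS]
      rw [Finset.sum_eq_single k]
      · simp [Pi.single_apply, eq_comm]
      · intro b _ hb; simp [hb]
      · simp
    · rw [Finset.sum_eq_single k]
      · simp
      · intro b _ hb; simp [hb]
      · simp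
  have hL : W.comap (LinearMap.inr ℤ (Fin n → ℤ) (Fin n → ℤ)) = ⊤ := by
    apply hg.red
    intro k k' hkk
    rw [Submodule.mem_comap]
    have := W.sub_mem (hk k) (hk k')
    rw [hkk] at this
    simpa using this
  have h0 : ∀ v, ((0, v) : (Fin n → ℤ) × (Fin n → ℤ)) ∈ W := by
    intro v
    have : v ∈ W.comap (LinearMap.inr ℤ (Fin n → ℤ) (Fin n → ℤ)) := by rw [hL]; trivial
    simpa using this
  have h3 : ∀ i, ((Pi.single i 1, 0) : (Fin n → ℤ) × (Fin n → ℤ)) ∈ W := by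
    intro i
    obtain ⟨k, rfl⟩ := hg.surj i
    have := W.sub_mem (hk k) (h0 (ex k))
    simpa using this
  have h4 : ((u, 0) : (Fin n → ℤ) × (Fin n → ℤ)) ∈ W := by
    have h5 : ((u, 0) : (Fin n → ℤ) × (Fin n → ℤ)) = ∑ i, u i • ((Pi.single i 1, 0) : (Fin n → ℤ) × (Fin n → ℤ)) := by
      ext j
      · simp [Prod.fst_sum, Finset.sum_apply, Pi.single_apply]
      · simp [Prod.snd_sum]
    rw [h5]
    exact W.sum_mem fun i _ => W.smul_mem _ (h3 i)
  have h6 := W.add_mem h4 (h0 v)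
  have h7 : ((u, v) : (Fin n → ℤ) × (Fin n → ℤ)) ∈ W := by simpa using h6
  exact h7

/-- Solving the monomial equations. -/
theorem Good.solve (hg : Good blk ex) (p : ι → ℂ) (hp : ∀ k, p k ≠ 0)
    (hb : ∀ m m' : ι → ℕ, (∀ i, BS blk (fun k => (m k : ℤ)) i = BS blk (fun k => (m' k : ℤ)) i) →
      (∀ j, ∑ k, (m k : ℤ) * ex k j = ∑ k, (m' k : ℤ) * ex k j) →
      ∏ k, p k ^ m k = ∏ k, p k ^ m' k) :
    ∃ (x : Torus n) (l : Fin n → ℂ), (∀ i, l i ≠ 0) ∧ ∀ k, p k = l (blk k) * mono (ex k) x := by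
  -- integral version
  have hz : ∀ m : ι → ℤ, (∀ i, BS blk m i = 0) → (∀ j, ∑ k, m k * ex k j = 0) →
      ∏ k, p k ^ m k = 1 := by
    intro m h1 h2
    have e : ∀ k, m k = ((m k).toNat : ℤ) - ((-m k).toNat : ℤ) := fun k => by omega
    have := hb (fun k => (m k).toNat) (fun k => (-m k).toNat) (by
      intro i
      rw [← sub_eq_zero, ← h1 i]
      simp only [BS, ← Finset.sum_filter, ← Finset.sum_sub_distrib]
      exact Finset.sum_congr rfl fun k _ => (e k).symm) (by
      intro j
      rw [← sub_eq_zero, ← h2 j, ← Finset.sum_sub_distrib]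
      refine Finset.sum_congr rfl fun k _ => ?_
      rw [← sub_mul, ← e k])
    calc ∏ k, p k ^ m k = ∏ k, (p k ^ (m k).toNat / p k ^ (-m k).toNat) := by
          refine Finset.prod_congr rfl fun k _ => ?_
          conv_lhs => rw [e k]
          rw [zpow_sub₀ (hp k), zpow_natCast, zpow_natCast]
      _ = 1 := by
          rw [Finset.prod_div_distrib, this, div_self]
          exact Finset.prod_ne_zero_iff.mpr fun k _ => pow_ne_zero _ (hp k)
  choose M hM1 hM2 using fun i : Fin n => hg.lattice (blk := blk) (Pi.single i 1) 0
  choose N hN1 hN2 using fun j : Fin n => hg.lattice (blk := blk) 0 (Pi.single j 1)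
  have hne : ∀ m : ι → ℤ, ∏ k, p k ^ m k ≠ 0 := fun m =>
    Finset.prod_ne_zero_iff.mpr fun k _ => zpow_ne_zero _ (hp k)
  refine ⟨fun j => Units.mk0 (∏ k, p k ^ N j k) (hne _), fun i => ∏ k, p k ^ M i k, fun i => hne _, ?_⟩
  intro k
  let m : ι → ℤ := fun k' => Pi.single (M := fun _ => ℤ) k 1 k' - (M (blk k) k' + ∑ j, ex k j * N j k')
  have h1 := hz m (by
    intro i
    have a1 := hM1 (blk k) i
    have a2 : ∀ j, BS blk (N j) i = 0 := fun j => hN1 j i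
    simp only [BS, ← Finset.sum_filter] at a1 a2 ⊢
    simp only [m, Finset.sum_sub_distrib, Finset.sum_add_distrib, a1]
    rw [Finset.sum_comm]
    simp only [← Finset.mul_sum, a2, mul_zero, Finset.sum_const_zero, add_zero]
    rw [Finset.sum_filter, Finset.sum_eq_single k]
    · simp [Pi.single_apply, eq_comm]
    · intro b _ hb; simp [hb]
    · simp) (by
    intro j
    have a1 := hM2 (blk k) j
    have a2 := fun j' => hN2 j' j
    simp only [m, sub_mul, add_mul, Finset.sum_sub_distrib, Finset.sum_add_distrib, a1, Finset.sum_mul]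
    rw [Finset.sum_comm]
    simp only [mul_assoc, ← Finset.mul_sum, a2]
    rw [Finset.sum_eq_single k]
    · simp [Pi.single_apply]
    · intro b _ hb; simp [hb]
    · simp)
  have h2 : ∏ k', p k' ^ m k' = p k / ((∏ k', p k' ^ M (blk k) k') *
      mono (ex k) (fun j => Units.mk0 (∏ k, p k ^ N j k) (hne _))) := by
    have b1 : ∀ k', p k' ^ m k' = p k' ^ (Pi.single (M := fun _ => ℤ) k 1 k') /
        (p k' ^ (M (blk k) k') * ∏ j, (p k' ^ N j k') ^ ex k j) := by
      intro k'
      simp only [m]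
      rw [zpow_sub₀ (hp k'), zpow_add₀ (hp k')]
      congr 2
      have : ∀ s : Finset (Fin n), p k' ^ (∑ j ∈ s, ex k j * N j k') = ∏ j ∈ s, (p k' ^ N j k') ^ ex k j := by
        intro s
        induction s using Finset.induction_on with
        | empty => simp
        | insert a s ha ih =>
          rw [Finset.sum_insert ha, Finset.prod_insert ha, zpow_add₀ (hp k'), ih, mul_comm (ex k a), zpow_mul]
      exact this _
    simp only [b1, Finset.prod_div_distrib, Finset.prod_mul_distrib]
    congr 1
    · rw [Finset.prod_eq_single k]
      · simp
      · intro b _ hb; simp [hb]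
      · simp
    · congr 1
      rw [Finset.prod_comm]
      simp only [mono, Units.val_mk0, Finset.prod_zpow]
  rw [h2] at h1
  exact (div_eq_one_iff_eq (mul_ne_zero (hne _) (mono_ne_zero _ _))).mp h1

end

theorem mem_zclosure {ι : Type} (Z : Set (ι → ℂ)) (f : ι → ℂ) :
    f ∈ zclosure Z ↔ ∀ G : MvPolynomial ι ℂ, (∀ c ∈ Z, MvPolynomial.eval c G = 0) →
      MvPolynomial.eval f G = 0 := by
  constructor
  · intro hf G hG
    have := hf {c | ∀ p ∈ ({G} : Set (MvPolynomial ι ℂ)), MvPolynomial.eval c p = 0}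
      ⟨⟨{G}, rfl⟩, fun c hc p hp => by rw [hp]; exact hG c hc⟩
    exact this G rfl
  · rintro h W ⟨⟨S, rfl⟩, hW⟩
    intro p hp
    exact h p fun c hc => hW hc p hp

section
variable {n : ℕ} {ι : Type} [Fintype ι] [DecidableEq ι]
variable {blk : ι → Fin n} {ex : ι → Fin n → ℤ} {i0 : Fin n} {sh : ℤ}

theorem exists_shift (ex : ι → Fin n → ℤ) : ∃ sh : ℤ, ∀ k j, 0 ≤ ex k j + sh := by
  refine ⟨∑ k, ∑ j, |ex k j|, fun k j => ?_⟩
  have h1 : |ex k j| ≤ ∑ j, |ex k j| :=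
    Finset.single_le_sum (f := fun j => |ex k j|) (fun _ _ => abs_nonneg _) (Finset.mem_univ j)
  have h2 : ∑ j, |ex k j| ≤ ∑ k, ∑ j, |ex k j| :=
    Finset.single_le_sum (f := fun k => ∑ j, |ex k j|)
      (fun _ _ => Finset.sum_nonneg fun _ _ => abs_nonneg _) (Finset.mem_univ k)
  have h3 := neg_abs_le (ex k j)
  linarith

theorem Good.vanishing (hg : Good blk ex) (hsh : ∀ k j, 0 ≤ ex k j + sh) :
    vanishingIdeal (zclosure (DS blk ex)) = RingHom.ker (psi blk ex i0 sh) := by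
  ext G
  rw [RingHom.mem_ker, hg.psi_eq_zero_iff hsh]
  constructor
  · intro h f hf
    exact h f ((mem_zclosure _ _).mpr fun G hG => hG f hf)
  · intro h f hf
    exact (mem_zclosure _ _).mp hf G h

/-- Abstract form of the main result. -/
theorem Good.main (hg : Good blk ex) (hlin : NonLin blk ex) (i0 : Fin n) :
    adim (zclosure (DS blk ex)) = ((Fintype.card ι - 1 : ℕ) : WithBot ℕ∞) ∧
    ∃ S : Set (ι → ℂ), IsAlgebraicSet S ∧ S ⊂ zclosure (DS blk ex) ∧
      ∀ f ∈ zclosure (DS blk ex) \ S, ∃ (x : Torus n) (l : Fin n → ℂ),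
        Sing blk ex (fun k => f k * mono (ex k) x) l ∧
        ∀ (y : Torus n) (μ : Fin n → ℂ), Sing blk ex (fun k => f k * mono (ex k) y) μ →
          y = x ∧ ∃ t : ℂ, μ = t • l := by
  obtain ⟨sh, hsh⟩ := exists_shift ex
  have hz : ∀ f, f ∈ zclosure (DS blk ex) ↔
      ∀ G, psi blk ex i0 sh G = 0 → MvPolynomial.eval f G = 0 := by
    intro f
    rw [mem_zclosure]
    exact forall_congr' fun G => by rw [hg.psi_eq_zero_iff hsh]
  refine ⟨by rw [adim, hg.vanishing (i0 := i0) hsh]; exact hg.krullDim hlin hsh i0, ?_⟩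
  obtain ⟨Δ, hΔ0, hΔ, hΔd⟩ := hg.exists_delta (i0 := i0) hlin hsh
  refine ⟨{f | ∀ p ∈ ({G | psi blk ex i0 sh G = 0} ∪ {∏ k, MvPolynomial.pderiv k Δ} :
    Set (MvPolynomial ι ℂ)), MvPolynomial.eval f p = 0}, ⟨_, rfl⟩, ⟨?_, ?_⟩, ?_⟩
  · intro f hf
    rw [hz]
    exact fun G hG => hf G (Or.inl hG)
  · intro hsub
    have h1 : psi blk ex i0 sh (∏ k, MvPolynomial.pderiv k Δ) ≠ 0 := by
      rw [map_prod]
      exact Finset.prod_ne_zero_iff.mpr fun k _ => hΔd k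
    apply h1
    rw [hg.psi_eq_zero_iff hsh]
    intro f hf
    exact hsub ((mem_zclosure _ _).mpr fun G hG => hG f hf) _ (Or.inr rfl)
  · rintro f ⟨hf, hfS⟩
    rw [hz] at hf
    let p : ι → ℂ := fun k => MvPolynomial.eval f (MvPolynomial.pderiv k Δ)
    have hp : ∀ k, p k ≠ 0 := by
      intro k hk
      apply hfS
      rintro q (hq | hq)
      · exact hf q hq
      · rw [hq, map_prod]
        exact Finset.prod_eq_zero (Finset.mem_univ k) hk
    obtain ⟨x, l, hl, hpx⟩ := hg.solve p hp (by
      intro m m' h1 h2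
      have := hf _ (hg.binomial hlin hsh hΔ m m' h1 h2)
      rw [map_sub, map_prod, map_prod, sub_eq_zero] at this
      simpa only [map_pow] using this)
    have hann := kap_annT (i0 := i0) hsh hΔ
    have e1 : ∀ i, BS blk (fun k => f k * p k) i = 0 := by
      intro i
      have := hf (BS blk (fun k => MvPolynomial.X k * MvPolynomial.pderiv k Δ) i) (by
        rw [← hann.1 i]
        simp only [BS, map_sum]
        refine Finset.sum_congr rfl fun k _ => ?_
        by_cases hk : blk k = i
        · simp only [hk, if_true, map_mul, kap]
          have : psi blk ex i0 sh (MvPolynomial.X k) = chi blk ex i0 sh k * gc (KT i0) blk ex k := by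
            simp [psi]
          rw [this]; ring
        · simp [hk])
      rw [← this]
      simp only [BS, map_sum]
      refine Finset.sum_congr rfl fun k _ => ?_
      by_cases hk : blk k = i
      · simp [hk, p]
      · simp [hk]
    have e2 : ∀ j, ∑ k, f k * p k * ((ex k j : ℤ) : ℂ) = 0 := by
      intro j
      have := hf (∑ k, MvPolynomial.X k * MvPolynomial.pderiv k Δ * ((ex k j : ℤ) : MvPolynomial ι ℂ)) (by
        rw [← hann.2 j]
        simp only [map_sum]
        refine Finset.sum_congr rfl fun k _ => ?_
        simp only [map_mul, kap, map_intCast]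
        have : psi blk ex i0 sh (MvPolynomial.X k) = chi blk ex i0 sh k * gc (KT i0) blk ex k := by
          simp [psi]
        rw [this]; ring)
      rw [← this]
      simp [p]
    have hS : Sing blk ex (fun k => f k * mono (ex k) x) l := by
      refine ⟨fun i => ?_, fun h => hl i0 (congrFun h i0), fun j => ?_⟩
      · apply mul_left_cancel₀ (hl i)
        rw [mul_zero, ← e1 i]
        simp only [BS, Finset.mul_sum]
        refine Finset.sum_congr rfl fun k _ => ?_
        by_cases hk : blk k = i
        · simp only [hk, if_true, hpx k]; ring
        · simp [hk]
      · rw [← e2 j]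
        refine Finset.sum_congr rfl fun k _ => ?_
        rw [hpx k]; ring
    refine ⟨x, l, hS, fun y μ hμ => ?_⟩
    have hgr := hg.grad (i0 := i0) hlin hsh hΔ y f μ hμ
    have hgr' : ∀ k k', p k * (μ (blk k') * mono (ex k') y) = p k' * (μ (blk k) * mono (ex k) y) := hgr
    have hμ0 : ∀ i, μ i ≠ 0 := by
      intro i hi
      apply hμ.ne
      ext i'
      obtain ⟨k, rfl⟩ := hg.surj i
      obtain ⟨k', rfl⟩ := hg.surj i'
      have := hgr' k k'
      rw [hi, zero_mul, mul_zero] at this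
      rcases mul_eq_zero.mp this with h | h
      · exact absurd h (hp k)
      · rcases mul_eq_zero.mp h with h | h
        · exact h
        · exact absurd h (mono_ne_zero _ _)
    have hyx : y = x := by
      let L : Submodule ℤ (Fin n → ℤ) := AddSubgroup.toIntSubmodule
        { carrier := {v | mono v y = mono v x}
          add_mem' := by
            intro a b ha hb
            simp only [Set.mem_setOf_eq] at ha hb ⊢
            rw [mono_add, mono_add, ha, hb]
          zero_mem' := by simp [mono]
          neg_mem' := by
            intro a ha
            simp only [Set.mem_setOf_eq] at ha ⊢
            simp only [mono, Pi.neg_apply, zpow_neg, Finset.prod_inv_distrib] at ha ⊢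
            rw [ha] }
      have hL : L = ⊤ := by
        apply hg.red
        intro k k' hkk
        change mono (ex k - ex k') y = mono (ex k - ex k') x
        have h1 := hgr' k k'
        rw [hpx k, hpx k', hkk] at h1
        have h2 : ∀ z : Torus n, mono (ex k) z = mono (ex k - ex k') z * mono (ex k') z := by
          intro z; rw [← mono_add, sub_add_cancel]
        rw [h2 x, h2 y] at h1
        have n1 := hl (blk k')
        have n2 := hμ0 (blk k')
        have n3 := mono_ne_zero (ex k') x
        have n4 := mono_ne_zero (ex k') y
        apply mul_left_cancel₀ (mul_ne_zero (mul_ne_zero n1 n2) (mul_ne_zero n3 n4))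
        linear_combination -h1
      ext j
      have : (Pi.single j 1 : Fin n → ℤ) ∈ L := by rw [hL]; trivial
      have h2 : mono (Pi.single j 1) y = mono (Pi.single j 1) x := this
      have h3 : ∀ z : Torus n, mono (Pi.single j 1) z = z j := by
        intro z
        rw [mono, Finset.prod_eq_single j]
        · simp
        · intro b _ hb; simp [hb]
        · simp
      rw [h3, h3] at h2
      exact h2
    refine ⟨hyx, μ i0 / l i0, ?_⟩
    ext i
    obtain ⟨k, rfl⟩ := hg.surj i
    obtain ⟨k', hk'⟩ := hg.surj i0
    have h1 := hgr' k k'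
    rw [hpx k, hpx k', hk', hyx] at h1
    have n1 := hl i0
    have n3 := mono_ne_zero (ex k') x
    have n4 := mono_ne_zero (ex k) x
    simp only [Pi.smul_apply, smul_eq_mul]
    rw [div_mul_eq_mul_div, eq_div_iff n1]
    apply mul_left_cancel₀ (mul_ne_zero n3 n4)
    linear_combination -h1
end

section
variable {n : ℕ} (A : Fin n → Finset (Fin n → ℤ))

theorem sum_CIdx {R : Type} [AddCommMonoid R] (F : CIdx A → R) :
    ∑ k, F k = ∑ i, ∑ a ∈ (A i).attach, F ⟨i, a⟩ := by
  rw [Fintype.sum_sigma]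
  rfl

theorem BS_CIdx (c : CIdx A → ℂ) (i : Fin n) :
    BS (fun k : CIdx A => k.1) c i = ∑ a ∈ (A i).attach, c ⟨i, a⟩ := by
  rw [BS, sum_CIdx, Finset.sum_eq_single i]
  · simp
  · intro b _ hb; simp [hb]
  · simp

theorem vecMul_jacobian (f : Coeff A) (x : Torus n) (l : Fin n → ℂ) (j : Fin n) :
    Matrix.vecMul l (jacobian A f x) j =
      (∑ k : CIdx A, l k.1 * (f k * mono k.2.1 x) * ((k.2.1 j : ℤ) : ℂ)) * (x j : ℂ)⁻¹ := by
  rw [sum_CIdx]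
  simp only [Matrix.vecMul, dotProduct, jacobian, Matrix.of_apply, Finset.sum_mul, Finset.mul_sum]
  exact Finset.sum_congr rfl fun i _ => Finset.sum_congr rfl fun a _ => by ring

theorem sing_iff (f : Coeff A) (x : Torus n) (l : Fin n → ℂ) :
    Sing (fun k : CIdx A => k.1) (fun k => k.2.1) (fun k => f k * mono k.2.1 x) l ↔
      IsRoot A f x ∧ l ≠ 0 ∧ Matrix.vecMul l (jacobian A f x) = 0 := by
  have h2 : Matrix.vecMul l (jacobian A f x) = 0 ↔
      ∀ j, ∑ k : CIdx A, l k.1 * (f k * mono k.2.1 x) * ((k.2.1 j : ℤ) : ℂ) = 0 := by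
    rw [funext_iff]
    refine forall_congr' fun j => ?_
    rw [vecMul_jacobian, Pi.zero_apply, mul_eq_zero, or_iff_left (inv_ne_zero (x j).ne_zero)]
  rw [h2]
  constructor
  · intro h
    refine ⟨fun i => ?_, h.ne, h.ker⟩
    rw [evalAt, ← h.sum i, BS_CIdx]
  · rintro ⟨h1, h2, h3⟩
    refine ⟨fun i => ?_, h2, h3⟩
    rw [BS_CIdx]
    exact h1 i

theorem isSingularRoot_iff (f : Coeff A) (x : Torus n) :
    IsSingularRoot A f x ↔
      ∃ l, Sing (fun k : CIdx A => k.1) (fun k => k.2.1) (fun k => f k * mono k.2.1 x) l := by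
  simp only [sing_iff, IsSingularRoot, ← Matrix.exists_vecMul_eq_zero_iff]
  constructor
  · rintro ⟨h1, l, h2, h3⟩; exact ⟨l, h1, h2, h3⟩
  · rintro ⟨l, h1, h2, h3⟩; exact ⟨h1, l, h2, h3⟩

theorem rank_of_null (J : Matrix (Fin n) (Fin n) ℂ) (l : Fin n → ℂ) (hl : l ≠ 0)
    (h0 : Matrix.vecMul l J = 0) (h : ∀ μ, Matrix.vecMul μ J = 0 → ∃ t : ℂ, μ = t • l) :
    J.rank = n - 1 := by
  have hk : LinearMap.ker (Matrix.transpose J).mulVecLin = Submodule.span ℂ {l} := by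
    ext μ
    rw [LinearMap.mem_ker, Matrix.mulVecLin_apply, Matrix.mulVec_transpose, Submodule.mem_span_singleton]
    constructor
    · intro hμ
      obtain ⟨t, ht⟩ := h μ hμ
      exact ⟨t, ht.symm⟩
    · rintro ⟨t, rfl⟩
      rw [Matrix.smul_vecMul, h0, smul_zero]
  have h1 := LinearMap.finrank_range_add_finrank_ker (Matrix.transpose J).mulVecLin
  rw [hk, finrank_span_singleton hl, Module.finrank_fin_fun] at h1
  rw [← Matrix.rank_transpose, Matrix.rank]
  omega

theorem good_CIdx (hn : 0 < n) (hred : IsReducedTuple A) (hirr : IsIrreducibleTuple A) :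
    Good (fun k : CIdx A => k.1) (fun k => k.2.1) := by
  have hne : ∀ i, (A i).Nonempty := by
    intro i
    by_contra he
    rw [Finset.not_nonempty_iff_eq_empty] at he
    rcases Nat.lt_or_ge 1 n with h1 | h1
    · refine hirr ⟨{i}, ⊥, by simp, by simpa using h1, by simp, ?_⟩
      intro i' hi'
      rw [Finset.mem_singleton] at hi'
      subst hi'
      exact ⟨0, by simp [he]⟩
    · refine hred ⟨⊥, ?_, ?_⟩
      · intro h
        have h2 : (Pi.single i 1 : Fin n → ℤ) ∈ (⊥ : Submodule ℤ (Fin n → ℤ)) := by rw [h]; trivial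
        rw [Submodule.mem_bot] at h2
        have := congrFun h2 i
        simp at this
      · intro i'
        have : i' = i := by
          apply Fin.ext
          have := i'.2
          have := i.2
          omega
        subst this
        exact ⟨0, by simp [he]⟩
  have htr : ∀ i (L : Submodule ℤ (Fin n → ℤ)), (∀ a ∈ A i, ∀ b ∈ A i, a - b ∈ L) → TranslatesInto (A i) L := by
    intro i L h
    obtain ⟨b, hb⟩ := hne i
    exact ⟨b, fun a ha => h a ha b hb⟩
  refine ⟨fun i => ?_, fun L hL => ?_, fun I L hI hIu hL => ?_⟩
  · obtain ⟨b, hb⟩ := hne i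
    exact ⟨⟨i, b, hb⟩, rfl⟩
  · by_contra hLt
    exact hred ⟨L, hLt, fun i => htr i L fun a ha b hb => hL ⟨i, a, ha⟩ ⟨i, b, hb⟩ rfl⟩
  · by_contra hc
    refine hirr ⟨I, L, Finset.card_pos.mpr hI, ?_, not_lt.mp hc, fun i hi =>
      htr i L fun a ha b hb => hL ⟨i, a, ha⟩ ⟨i, b, hb⟩ rfl hi⟩
    have := (Finset.card_lt_iff_ne_univ I).mpr hIu
    simpa using this

end

/-- Corollary 3.23: a reduced irreducible tuple which is not linear up to a
monomial change of variables is dual effective; moreover, outside a proper Zariski-closed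
subset `S ⊊ D_A`, every `f ∈ D_A` has exactly one singular root, the Jacobian at that root has
rank `n − 1`, and every other root is nonsingular. -/
theorem generic_discriminant_point_has_unique_mild_singularity {n : ℕ}
    (A : Fin n → Finset (Fin n → ℤ))
    (hred : IsReducedTuple A) (hirr : IsIrreducibleTuple A)
    (hlin : ¬ EssentiallyLinear A) :
    DualEffective A ∧
    ∃ S : Set (Coeff A), IsAlgebraicSet S ∧ S ⊂ discSet A ∧
      ∀ f ∈ discSet A \ S, ∃ x : Torus n,
        IsSingularRoot A f x ∧ (jacobian A f x).rank = n - 1 ∧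
        ∀ y : Torus n, IsSingularRoot A f y → y = x := by
  rcases Nat.eq_zero_or_pos n with rfl | hn
  · exact absurd ⟨AddEquiv.refl _, 0, fun i => i.elim0⟩ hlin
  have hg := good_CIdx A hn hred hirr
  have hnl : NonLin (fun k : CIdx A => k.1) (fun k => k.2.1) := by
    rintro ⟨φ, v, h⟩
    exact hlin ⟨φ, v, fun i a ha => h ⟨i, a, ha⟩⟩
  have hDS : discSet A = zclosure (DS (fun k : CIdx A => k.1) (fun k => k.2.1)) := by
    rw [discSet]
    congr 1
    ext f
    simp only [Set.mem_setOf_eq, isSingularRoot_iff, DS]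
  obtain ⟨h1, S, hS1, hS2, hS3⟩ := hg.main hnl ⟨0, hn⟩
  rw [DualEffective, hDS]
  refine ⟨h1, S, hS1, hS2, fun f hf => ?_⟩
  obtain ⟨x, l, hx, hu⟩ := hS3 f hf
  refine ⟨x, (isSingularRoot_iff A f x).mpr ⟨l, hx⟩, ?_, fun y hy => ?_⟩
  · have h2 := (sing_iff A f x l).mp hx
    refine rank_of_null _ l h2.2.1 h2.2.2 fun μ hμ => ?_
    by_cases h0 : μ = 0
    · exact ⟨0, by simp [h0]⟩
    · exact (hu x μ ((sing_iff A f x μ).mpr ⟨h2.1, h0, hμ⟩)).2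
  · obtain ⟨μ, hμ⟩ := (isSingularRoot_iff A f y).mp hy
    exact (hu y μ hμ).1

end Esterov
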